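/- arXiv:1812.03748 — 3 statements merged into one kernel-verified Lean document; each statement's English description precedes it below -/
import Mathlib

section
/- Every non-empty prefix of a complementary symmetric Rote sequence has exactly three distinct return words. -/
/-- Words over the binary alphabet `{0,1}`, represented as `ZMod 2`. -/
abbrev Word := List (ZMod 2)

/-- The letter-exchange morphism `E`. -/
def Ex (v : Word) : Word := v.map (· + 1)

/-- `m` is an occurrence of the word `w` in the sequence `s`. -/
def OccAt (s : ℕ → ZMod 2) (w : Word) (m : ℕ) : Prop :=
  w = List.ofFn fun i : Fin w.length => s (m + i)

/-- `w` is a factor of the sequence `s`. -/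
def IsFactor (s : ℕ → ZMod 2) (w : Word) : Prop := ∃ m, OccAt s w m

/-- Factor complexity of a sequence. -/
noncomputable def Cplx (s : ℕ → ZMod 2) (n : ℕ) : ℕ :=
  {w : Word | w.length = n ∧ IsFactor s w}.ncard

/-- `v` is a complementary symmetric Rote sequence. -/
def IsCSRote (v : ℕ → ZMod 2) : Prop :=
  (∀ n, 1 ≤ n → Cplx v n = 2 * n) ∧
  (∀ w : Word, IsFactor v w → IsFactor v (Ex w))

/-- The set of return words to the word `w` in the sequence `s`: words read between
two consecutive occurrences of `w` in `s`. -/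
def ReturnWords (s : ℕ → ZMod 2) (w : Word) : Set Word :=
  {r | ∃ i j, OccAt s w i ∧ OccAt s w j ∧ i < j ∧
        (∀ t, i < t → t < j → ¬ OccAt s w t) ∧
        r = List.ofFn fun t : Fin (j - i) => s (i + t)}

/-- The factor of `s` of length `N` that starts at position `i`. -/
def factorAt (s : ℕ → ZMod 2) (i N : ℕ) : Word := List.ofFn fun k : Fin N => s (i + k)

/-- The factor of length `M` at position `i` is right special. -/
def RightSpecialAt (s : ℕ → ZMod 2) (i M : ℕ) : Prop :=
  ∃ j, (∀ k < M, s (i + k) = s (j + k)) ∧ s (i + M) ≠ s (j + M)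

/-- The set of right special factors of length `M`. -/
def rightSpecials (s : ℕ → ZMod 2) (M : ℕ) : Set Word :=
  {x | ∃ i, RightSpecialAt s i M ∧ factorAt s i M = x}

/-- Positions at which the prefix of length `n` occurs and does not occur again
within the next `d` positions. -/
def nonReturning (s : ℕ → ZMod 2) (n d : ℕ) : Set ℕ :=
  {i | (∀ k < n, s (i + k) = s k) ∧ ∀ t, 0 < t → t ≤ d → ¬ ∀ k < n, s (i + t + k) = s k}

/-- Right special factors in which the prefix of length `n` occurs exactly once, as a prefix. -/
def branchWords (s : ℕ → ZMod 2) (n : ℕ) : Set Word :=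
  {y | ∃ d i, i ∈ nonReturning s n d ∧ RightSpecialAt s i (n + d) ∧ factorAt s i (n + d) = y}

section Words

variable {s : ℕ → ZMod 2}

lemma zmod_two_ne_add_one (a : ZMod 2) : a ≠ a + 1 := by
  revert a; decide

lemma zmod_two_add_one_add_one (a : ZMod 2) : a + 1 + 1 = a := by
  revert a; decide

@[simp] lemma length_factorAt (i N : ℕ) : (factorAt s i N).length = N := by
  simp [factorAt]

lemma factorAt_eq_iff {i j N : ℕ} :
    factorAt s i N = factorAt s j N ↔ ∀ k < N, s (i + k) = s (j + k) := by
  rw [factorAt, factorAt, List.ofFn_inj, funext_iff, Fin.forall_iff]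

lemma factorAt_succ (i N : ℕ) : factorAt s i (N + 1) = factorAt s i N ++ [s (i + N)] := by
  rw [factorAt, List.ofFn_succ', List.concat_eq_append]
  rfl

lemma factorAt_take {i M N : ℕ} (h : M ≤ N) : (factorAt s i N).take M = factorAt s i M := by
  apply List.ext_getElem
  · simp [h]
  · intro k h₁ h₂
    simp [factorAt]

lemma finite_of_length_eq {A : Set Word} {N : ℕ} (h : ∀ x ∈ A, x.length = N) : A.Finite :=
  (List.finite_length_eq (ZMod 2) N).subset h

lemma finite_image_factorAt (I : Set ℕ) (N : ℕ) : ((factorAt s · N) '' I).Finite :=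
  finite_of_length_eq (N := N) (by rintro _ ⟨i, -, rfl⟩; simp)

lemma finite_of_length_le {A : Set Word} {N : ℕ} (h : ∀ x ∈ A, x.length ≤ N) : A.Finite :=
  (List.finite_length_le (ZMod 2) N).subset h

lemma occAt_factorAt_iff {i j N : ℕ} :
    OccAt s (factorAt s i N) j ↔ ∀ k < N, s (j + k) = s (i + k) := by
  have : (List.ofFn fun k : Fin (factorAt s i N).length => s (j + k)) = factorAt s j N := by
    apply List.ext_getElem <;> simp [factorAt]
  rw [OccAt, this, eq_comm, factorAt_eq_iff]

lemma cplx_eq_ncard (N : ℕ) : Cplx s N = ((factorAt s · N) '' Set.univ).ncard := by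
  rw [Cplx]
  congr 1
  ext x
  constructor
  · rintro ⟨rfl, m, hm⟩
    exact ⟨m, trivial, hm.symm⟩
  · rintro ⟨m, -, rfl⟩
    exact ⟨by simp, m, occAt_factorAt_iff.2 fun _ _ => rfl⟩

lemma ncard_image_factorAt_succ {I : Set ℕ} {M : ℕ}
    (hI : ∀ i ∈ I, ∀ j, (∀ k < M, s (i + k) = s (j + k)) → j ∈ I) :
    ((factorAt s · (M + 1)) '' I).ncard = ((factorAt s · M) '' I).ncard +
      {x | ∃ i ∈ I, RightSpecialAt s i M ∧ factorAt s i M = x}.ncard := by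
  let E : ZMod 2 → Set Word := fun a => (factorAt s · M) '' {i | i ∈ I ∧ s (i + M) = a}
  have hfin : ∀ a, (E a).Finite := fun a => finite_image_factorAt _ _
  have hcases : ∀ a : ZMod 2, a = 0 ∨ a = 1 := by decide
  have hunion : (factorAt s · M) '' I = E 0 ∪ E 1 := by
    ext x
    constructor
    · rintro ⟨i, hi, rfl⟩
      rcases hcases (s (i + M)) with h | h
      · exact Or.inl ⟨i, ⟨hi, h⟩, rfl⟩
      · exact Or.inr ⟨i, ⟨hi, h⟩, rfl⟩
    · rintro (⟨i, ⟨hi, -⟩, rfl⟩ | ⟨i, ⟨hi, -⟩, rfl⟩) <;> exact ⟨i, hi, rfl⟩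
  have hinter : {x | ∃ i ∈ I, RightSpecialAt s i M ∧ factorAt s i M = x} = E 0 ∩ E 1 := by
    ext x
    constructor
    · rintro ⟨i, hi, ⟨j, hj, hne⟩, rfl⟩
      have hji := (factorAt_eq_iff.2 hj).symm
      have hjI := hI i hi j hj
      rcases hcases (s (i + M)) with h | h <;> rcases hcases (s (j + M)) with h' | h'
      · exact absurd (h.trans h'.symm) hne
      · exact ⟨⟨i, ⟨hi, h⟩, rfl⟩, ⟨j, ⟨hjI, h'⟩, hji⟩⟩
      · exact ⟨⟨j, ⟨hjI, h'⟩, hji⟩, ⟨i, ⟨hi, h⟩, rfl⟩⟩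
      · exact absurd (h.trans h'.symm) hne
    · rintro ⟨⟨i, ⟨hi, h⟩, rfl⟩, ⟨j, ⟨hj, h'⟩, hji⟩⟩
      refine ⟨i, hi, ⟨j, factorAt_eq_iff.1 hji.symm, ?_⟩, rfl⟩
      rw [h, h']
      decide
  have hsplit : (factorAt s · (M + 1)) '' I = (· ++ [0]) '' E 0 ∪ (· ++ [1]) '' E 1 := by
    ext x
    constructor
    · rintro ⟨i, hi, rfl⟩
      rcases hcases (s (i + M)) with h | h
      · exact Or.inl ⟨_, ⟨i, ⟨hi, h⟩, rfl⟩, by simp [factorAt_succ, h]⟩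
      · exact Or.inr ⟨_, ⟨i, ⟨hi, h⟩, rfl⟩, by simp [factorAt_succ, h]⟩
    · rintro (⟨_, ⟨i, ⟨hi, h⟩, rfl⟩, rfl⟩ | ⟨_, ⟨i, ⟨hi, h⟩, rfl⟩, rfl⟩)
      · exact ⟨i, hi, by simp [factorAt_succ, h]⟩
      · exact ⟨i, hi, by simp [factorAt_succ, h]⟩
  have hdisj : Disjoint ((· ++ [(0 : ZMod 2)]) '' E 0) ((· ++ [(1 : ZMod 2)]) '' E 1) := by
    rw [Set.disjoint_left]
    rintro _ ⟨x, -, rfl⟩ ⟨y, -, hy⟩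
    have := (List.append_inj' hy rfl).2
    simp at this
  rw [hsplit, Set.ncard_union_eq hdisj ((hfin 0).image _) ((hfin 1).image _),
    Set.ncard_image_of_injective _ (List.append_left_injective _),
    Set.ncard_image_of_injective _ (List.append_left_injective _),
    hinter, hunion, Set.ncard_union_add_ncard_inter _ _ (hfin 0) (hfin 1)]

lemma RightSpecialAt.suffix {i a M : ℕ} (h : RightSpecialAt s i (a + M)) :
    RightSpecialAt s (i + a) M := by
  obtain ⟨j, hj, hne⟩ := h
  refine ⟨j + a, fun k hk => ?_, ?_⟩
  · simpa only [add_assoc] using hj (a + k) (by omega)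
  · simpa only [add_assoc] using hne

lemma RightSpecialAt.complement {i j M : ℕ} (h : RightSpecialAt s i M)
    (hij : ∀ k < M + 1, s (j + k) = s (i + k) + 1)
    (hE : ∀ i N, ∃ j, ∀ k < N, s (j + k) = s (i + k) + 1) : RightSpecialAt s j M := by
  obtain ⟨l, hl, hne⟩ := h
  obtain ⟨l', hl'⟩ := hE l (M + 1)
  refine ⟨l', fun k hk => ?_, ?_⟩
  · rw [hij k (by omega), hl' k (by omega), hl k hk]
  · rw [hij M (by omega), hl' M (by omega)]
    simpa using hne

end Words

section Rote

variable {s : ℕ → ZMod 2}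

lemma IsCSRote.exists_complement (h : IsCSRote s) (i N : ℕ) :
    ∃ j, ∀ k < N, s (j + k) = s (i + k) + 1 := by
  obtain ⟨j, hj⟩ := h.2 (factorAt s i N) ⟨i, occAt_factorAt_iff.2 fun _ _ => rfl⟩
  refine ⟨j, fun k hk => ?_⟩
  have := congrArg (fun l : Word => l[k]?) hj
  simp [Ex, factorAt, hk] at this
  exact this.symm

lemma IsCSRote.not_periodic (h : IsCSRote s) {m : ℕ} (hm : 0 < m) : ∃ k, s (m + k) ≠ s k := by
  by_contra! hper
  have hper' : ∀ i, ∃ j < m, ∀ k, s (i + k) = s (j + k) := by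
    intro i
    induction i using Nat.strong_induction_on with
    | _ i ih =>
      by_cases hi : i < m
      · exact ⟨i, hi, fun _ => rfl⟩
      · obtain ⟨j, hj, hk⟩ := ih (i - m) (by omega)
        refine ⟨j, hj, fun k => ?_⟩
        rw [← hk k, ← hper (i - m + k)]
        congr 1
        omega
  have hsub : (factorAt s · m) '' Set.univ ⊆ (factorAt s · m) '' (Finset.range m : Set ℕ) := by
    rintro _ ⟨i, -, rfl⟩
    obtain ⟨j, hj, hk⟩ := hper' i
    exact ⟨j, by simpa using hj, factorAt_eq_iff.2 fun k _ => (hk k).symm⟩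
  have h₁ := Set.ncard_le_ncard hsub (finite_image_factorAt _ _)
  have h₂ := Set.ncard_image_le (f := (factorAt s · m)) (Finset.range m).finite_toSet
  rw [Set.ncard_coe_finset, Finset.card_range] at h₂
  have h₃ := h.1 m hm
  rw [cplx_eq_ncard] at h₃
  omega

lemma IsCSRote.prefix_recurs (h : IsCSRote s) (N : ℕ) :
    ∃ m, 0 < m ∧ ∀ k < N, s (m + k) = s k := by
  obtain ⟨m, hm⟩ := h.exists_complement 0 (N + 1)
  obtain ⟨m', hm'⟩ := h.exists_complement 0 (m + N + 1)
  simp only [zero_add] at hm hm'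
  refine ⟨m' + m, ?_, fun k hk => ?_⟩
  · rcases Nat.eq_zero_or_pos m with rfl | hpos
    · exact absurd (hm 0 (by omega)) (zmod_two_ne_add_one _)
    · omega
  · rw [add_assoc, hm' _ (by omega), hm k (by omega), zmod_two_add_one_add_one]

lemma IsCSRote.exists_rightSpecialAt_zero (h : IsCSRote s) (K : ℕ) :
    ∃ M, K ≤ M ∧ RightSpecialAt s 0 M := by
  classical
  obtain ⟨m, hm, hmK⟩ := h.prefix_recurs K
  have hex := h.not_periodic hm
  refine ⟨Nat.find hex, ?_, m, fun k hk => ?_, ?_⟩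
  · by_contra! hlt
    exact Nat.find_spec hex (hmK _ hlt)
  · simpa [eq_comm] using Nat.find_min hex hk
  · simpa [eq_comm] using Nat.find_spec hex

lemma IsCSRote.ncard_rightSpecials (h : IsCSRote s) {M : ℕ} (hM : 1 ≤ M) :
    (rightSpecials s M).ncard = 2 := by
  have h₁ := ncard_image_factorAt_succ (s := s) (I := Set.univ) (M := M) (by simp)
  rw [← cplx_eq_ncard, ← cplx_eq_ncard, h.1 M hM, h.1 (M + 1) (by omega)] at h₁
  have h₂ : rightSpecials s M =
      {x | ∃ i ∈ Set.univ, RightSpecialAt s i M ∧ factorAt s i M = x} := by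
    simp [rightSpecials]
  rw [h₂]
  omega

lemma IsCSRote.eq_or_complement (h : IsCSRote s) {M i j : ℕ} (hM : 1 ≤ M)
    (hi : RightSpecialAt s i M) (hj : RightSpecialAt s j M) :
    (∀ k < M, s (i + k) = s (j + k)) ∨ ∀ k < M, s (i + k) = s (j + k) + 1 := by
  obtain ⟨l, hl⟩ := h.exists_complement j (M + 1)
  have hlR := hj.complement hl h.exists_complement
  have hne : factorAt s j M ≠ factorAt s l M := by
    intro heq
    have := factorAt_eq_iff.1 heq 0 (by omega)
    rw [hl 0 (by omega)] at this
    exact zmod_two_ne_add_one _ this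
  have hsub : {factorAt s j M, factorAt s l M} ⊆ rightSpecials s M := by
    rintro _ (rfl | rfl)
    exacts [⟨j, hj, rfl⟩, ⟨l, hlR, rfl⟩]
  have hfin : (rightSpecials s M).Finite :=
    finite_of_length_eq (N := M) (by rintro _ ⟨i, -, rfl⟩; simp)
  have heq := Set.eq_of_subset_of_ncard_le hsub
    (by rw [h.ncard_rightSpecials hM, Set.ncard_pair hne]) hfin
  have hmem : factorAt s i M ∈ rightSpecials s M := ⟨i, hi, rfl⟩
  rw [← heq] at hmem
  rcases hmem with hmem | hmem
  · exact Or.inl (factorAt_eq_iff.1 hmem)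
  · refine Or.inr fun k hk => ?_
    rw [factorAt_eq_iff.1 hmem k hk, hl k (by omega)]

lemma exists_last {p : ℕ → Prop} {b m : ℕ} (hm : m ≤ b) (hp : p m) :
    ∃ t ≤ b, p t ∧ ∀ r, t < r → r ≤ b → ¬ p r := by
  classical
  exact ⟨Nat.findGreatest p b, Nat.findGreatest_le b, Nat.findGreatest_spec hm hp,
    fun r h₁ h₂ => Nat.findGreatest_is_greatest h₁ h₂⟩

lemma IsCSRote.ncard_branchWords (h : IsCSRote s) {n : ℕ} (hn : 1 ≤ n) :
    (branchWords s n).ncard = 2 := by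
  obtain ⟨m, hm⟩ := h.exists_complement 0 n
  simp only [zero_add] at hm
  obtain ⟨M, hM, hR⟩ := h.exists_rightSpecialAt_zero (m + n)
  obtain ⟨t, htM, ht, htlast⟩ := exists_last (p := fun t => ∀ k < n, s (t + k) = s k)
    (b := M - n) (m := 0) (by omega) (by simp)
  obtain ⟨u, huM, hu, hulast⟩ := exists_last (p := fun t => ∀ k < n, s (t + k) = s k + 1)
    (b := M - n) (m := m) (by omega) hm
  have hsuffix : ∀ r ≤ M - n, RightSpecialAt s r (n + (M - n - r)) := by
    intro r hr
    have : RightSpecialAt s 0 (r + (n + (M - n - r))) := by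
      convert hR using 1; omega
    simpa using this.suffix
  obtain ⟨u', hu'⟩ := h.exists_complement u (n + (M - n - u) + 1)
  have hu'R := (hsuffix u huM).complement hu' h.exists_complement
  have ht_mem : t ∈ nonReturning s n (M - n - t) :=
    ⟨ht, fun r h₁ h₂ => htlast (t + r) (by omega) (by omega)⟩
  have hu'_mem : u' ∈ nonReturning s n (M - n - u) := by
    refine ⟨fun k hk => ?_, fun r h₁ h₂ hocc => ?_⟩
    · rw [hu' k (by omega), hu k hk, zmod_two_add_one_add_one]
    · refine hulast (u + r) (by omega) (by omega) fun k hk => ?_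
      have := hu' (r + k) (by omega)
      rw [← add_assoc, ← add_assoc, hocc k hk] at this
      rw [this, zmod_two_add_one_add_one]
  have hne : factorAt s t (n + (M - n - t)) ≠ factorAt s u' (n + (M - n - u)) := by
    intro heq
    have hlen := congrArg List.length heq
    simp only [length_factorAt] at hlen
    obtain rfl : t = u := by omega
    have := factorAt_eq_iff.1 heq 0 (by omega)
    rw [hu' 0 (by omega)] at this
    exact zmod_two_ne_add_one _ this
  have hset : branchWords s n =
      {factorAt s t (n + (M - n - t)), factorAt s u' (n + (M - n - u))} := by
    ext y
    constructor
    · rintro ⟨d, i, ⟨hi, hid⟩, hiR, rfl⟩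
      by_cases hd : n + d ≤ M
      · have hr := hsuffix (M - n - d) (by omega)
        have hsub : M - n - (M - n - d) = d := by omega
        rw [hsub] at hr
        generalize hr' : M - n - d = r at *
        rcases h.eq_or_complement (by omega) hiR hr with hag | hag
        · left
          obtain rfl : r = t := by
            rcases lt_trichotomy r t with hlt | heq | hlt
            · refine absurd (fun k hk => ?_) (hid (t - r) (by omega) (by omega))
              rw [add_assoc, hag _ (by omega), ← ht k hk]
              congr 1; omega
            · exact heq
            · refine absurd (fun k hk => ?_) (htlast r hlt (by omega))
              rw [← hag k (by omega), hi k hk]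
          rw [hsub, factorAt_eq_iff]
          exact hag
        · right
          obtain rfl : r = u := by
            rcases lt_trichotomy r u with hlt | heq | hlt
            · refine absurd (fun k hk => ?_) (hid (u - r) (by omega) (by omega))
              rw [add_assoc, hag _ (by omega), ← zmod_two_add_one_add_one (s k), ← hu k hk]
              congr 2; omega
            · exact heq
            · refine absurd (fun k hk => ?_) (hulast r hlt (by omega))
              rw [← hi k hk, hag k (by omega), zmod_two_add_one_add_one]
          rw [Set.mem_singleton_iff, hsub, factorAt_eq_iff]
          intro k hk
          rw [hag k hk, hu' k (by omega)]
      · have hr : RightSpecialAt s (i + (n + d - M)) M := by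
          apply RightSpecialAt.suffix
          convert hiR using 1; omega
        rcases h.eq_or_complement (by omega) hr hR with hag | hag
        · refine absurd (fun k hk => ?_) (hid (n + d - M) (by omega) (by omega))
          rw [hag k (by omega), zero_add]
        · refine absurd (fun k hk => ?_) (hid (n + d - M + m) (by omega) (by omega))
          have := hag (m + k) (by omega)
          rw [zero_add, hm k hk, zmod_two_add_one_add_one] at this
          rw [← this]
          congr 1; omega
    · rintro (rfl | rfl)
      exacts [⟨_, t, ht_mem, hsuffix t htM, rfl⟩, ⟨_, u', hu'_mem, hu'R, rfl⟩]
  rw [hset, Set.ncard_pair hne]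

end Rote

section ReturnWords

variable {s : ℕ → ZMod 2} {n : ℕ}

lemma mem_returnWords_iff {r : Word} : r ∈ ReturnWords s (factorAt s 0 n) ↔
    ∃ d, ∃ i ∈ nonReturning s n d, (∀ k < n, s (i + (d + 1) + k) = s k) ∧
      factorAt s i (d + 1) = r := by
  simp only [ReturnWords, Set.mem_ofPred_eq, occAt_factorAt_iff, zero_add]
  constructor
  · rintro ⟨i, j, hi, hj, hij, hbetween, rfl⟩
    obtain ⟨d, rfl⟩ : ∃ d, j = i + (d + 1) := ⟨j - i - 1, by omega⟩
    refine ⟨d, i, ⟨hi, fun t h₁ h₂ => hbetween (i + t) (by omega) (by omega)⟩, hj, ?_⟩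
    rw [Nat.add_sub_cancel_left]
    rfl
  · rintro ⟨d, i, ⟨hi, hid⟩, hj, rfl⟩
    refine ⟨i, i + (d + 1), hi, hj, by omega, fun t h₁ h₂ => ?_, ?_⟩
    · have := hid (t - i) (by omega) (by omega)
      rwa [Nat.add_sub_cancel' h₁.le] at this
    · rw [Nat.add_sub_cancel_left]
      rfl

lemma nonReturning_congr {d i j : ℕ} (hi : i ∈ nonReturning s n d)
    (hij : ∀ k < n + d, s (i + k) = s (j + k)) : j ∈ nonReturning s n d := by
  refine ⟨fun k hk => by rw [← hij k (by omega), hi.1 k hk], fun t h₁ h₂ hocc => ?_⟩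
  refine hi.2 t h₁ h₂ fun k hk => ?_
  rw [← hocc k hk, add_assoc, add_assoc, hij (t + k) (by omega)]

lemma ncard_returnWords_length_eq (d : ℕ) :
    {r ∈ ReturnWords s (factorAt s 0 n) | r.length = d + 1}.ncard =
      ((factorAt s · (n + d + 1)) ''
        {i ∈ nonReturning s n d | ∀ k < n, s (i + (d + 1) + k) = s k}).ncard := by
  have himage : {r ∈ ReturnWords s (factorAt s 0 n) | r.length = d + 1} =
      (List.take (d + 1)) '' ((factorAt s · (n + d + 1)) ''
        {i ∈ nonReturning s n d | ∀ k < n, s (i + (d + 1) + k) = s k}) := by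
    ext r
    rw [Set.mem_ofPred_eq, mem_returnWords_iff]
    constructor
    · rintro ⟨⟨d', i, hi, hj, rfl⟩, hlen⟩
      obtain rfl : d' = d := by simpa using hlen
      exact ⟨_, ⟨i, ⟨hi, hj⟩, rfl⟩, factorAt_take (by omega)⟩
    · rintro ⟨_, ⟨i, ⟨hi, hj⟩, rfl⟩, rfl⟩
      simp only [factorAt_take (s := s) (i := i) (show d + 1 ≤ n + d + 1 by omega)]
      exact ⟨⟨d, i, hi, hj, rfl⟩, by simp⟩
  rw [himage, Set.InjOn.ncard_image]
  rintro _ ⟨i, ⟨hi, hi'⟩, rfl⟩ _ ⟨j, ⟨hj, hj'⟩, rfl⟩ heq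
  simp only [factorAt_take (s := s) (show d + 1 ≤ n + d + 1 by omega), factorAt_eq_iff] at heq ⊢
  intro k hk
  by_cases hkd : k < d + 1
  · exact heq k hkd
  · have h₁ := hi' (k - (d + 1)) (by omega)
    have h₂ := hj' (k - (d + 1)) (by omega)
    rw [add_assoc, Nat.add_sub_cancel' (by omega)] at h₁ h₂
    rw [h₁, h₂]

lemma ncard_nonReturning_add_ncard_returnWords (d : ℕ) :
    ((factorAt s · (n + d)) '' nonReturning s n d).ncard +
      {r ∈ ReturnWords s (factorAt s 0 n) | r.length ≤ d}.ncard =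
    1 + {y ∈ branchWords s n | y.length < n + d}.ncard := by
  induction d with
  | zero =>
    have h₁ : (factorAt s · (n + 0)) '' nonReturning s n 0 = {factorAt s 0 n} := by
      ext x
      constructor
      · rintro ⟨i, hi, rfl⟩
        exact factorAt_eq_iff.2 fun k hk => by rw [hi.1 k hk, zero_add]
      · rintro rfl
        exact ⟨0, ⟨by simp, fun t h₁ h₂ => by omega⟩, rfl⟩
    have h₂ : {r ∈ ReturnWords s (factorAt s 0 n) | r.length ≤ 0} = ∅ := by
      ext r
      simp only [Set.mem_ofPred_eq, Set.mem_empty_iff_false, iff_false, mem_returnWords_iff]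
      rintro ⟨⟨d, i, -, -, rfl⟩, hlen⟩
      simp at hlen
    have h₃ : {y ∈ branchWords s n | y.length < n + 0} = ∅ := by
      ext y
      simp only [Set.mem_ofPred_eq, Set.mem_empty_iff_false, iff_false]
      rintro ⟨⟨d, i, -, -, rfl⟩, hlen⟩
      simp at hlen
    rw [h₁, h₂, h₃]
    simp
  | succ d ih =>
    have hstep := ncard_image_factorAt_succ (s := s) (I := nonReturning s n d) (M := n + d)
      fun i hi j hij => nonReturning_congr hi hij
    have hcover : (factorAt s · (n + d + 1)) '' nonReturning s n d =
        (factorAt s · (n + d + 1)) '' nonReturning s n (d + 1) ∪ (factorAt s · (n + d + 1)) ''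
          {i ∈ nonReturning s n d | ∀ k < n, s (i + (d + 1) + k) = s k} := by
      rw [← Set.image_union]
      congr 1
      ext i
      constructor
      · intro hi
        by_cases hocc : ∀ k < n, s (i + (d + 1) + k) = s k
        · exact Or.inr ⟨hi, hocc⟩
        · refine Or.inl ⟨hi.1, fun t h₁ h₂ => ?_⟩
          rcases Nat.lt_or_eq_of_le h₂ with hlt | rfl
          · exact hi.2 t h₁ (by omega)
          · exact hocc
      · rintro (hi | hi)
        · exact ⟨hi.1, fun t h₁ h₂ => hi.2 t h₁ (by omega)⟩
        · exact hi.1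
    have hdisj : Disjoint ((factorAt s · (n + d + 1)) '' nonReturning s n (d + 1))
        ((factorAt s · (n + d + 1)) ''
          {i ∈ nonReturning s n d | ∀ k < n, s (i + (d + 1) + k) = s k}) := by
      rw [Set.disjoint_left]
      rintro _ ⟨i, hi, rfl⟩ ⟨j, ⟨-, hj⟩, heq⟩
      refine hi.2 (d + 1) (by omega) le_rfl fun k hk => ?_
      rw [← hj k hk, add_assoc i, add_assoc j, factorAt_eq_iff.1 heq _ (by omega)]
    rw [hcover, Set.ncard_union_eq hdisj (finite_image_factorAt _ _) (finite_image_factorAt _ _),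
      ← ncard_returnWords_length_eq] at hstep
    have hret : {r ∈ ReturnWords s (factorAt s 0 n) | r.length ≤ d + 1} =
        {r ∈ ReturnWords s (factorAt s 0 n) | r.length ≤ d} ∪
          {r ∈ ReturnWords s (factorAt s 0 n) | r.length = d + 1} := by
      ext r
      simp only [Set.mem_union, Set.mem_ofPred_eq, Nat.le_succ_iff, ← and_or_left,
        Nat.succ_eq_add_one]
    have hbranch : {y ∈ branchWords s n | y.length < n + (d + 1)} =
        {y ∈ branchWords s n | y.length < n + d} ∪
          {x | ∃ i ∈ nonReturning s n d,
            RightSpecialAt s i (n + d) ∧ factorAt s i (n + d) = x} := by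
      ext y
      constructor
      · rintro ⟨hy, hlen⟩
        by_cases hlt : y.length < n + d
        · exact Or.inl ⟨hy, hlt⟩
        · obtain ⟨d', i, hi, hR, rfl⟩ := hy
          rw [length_factorAt] at hlen hlt
          obtain rfl : d' = d := by omega
          exact Or.inr ⟨i, hi, hR, rfl⟩
      · rintro (⟨hy, hlen⟩ | ⟨i, hi, hR, rfl⟩)
        · exact ⟨hy, by omega⟩
        · exact ⟨⟨d, i, hi, hR, rfl⟩, by simp⟩
    rw [hret, hbranch, Set.ncard_union_eq _ (finite_of_length_le fun r hr => hr.2)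
      (finite_of_length_eq fun r hr => hr.2),
      Set.ncard_union_eq _ (finite_of_length_le fun y hy => hy.2.le)
      (finite_of_length_eq (N := n + d) (by rintro _ ⟨i, -, -, rfl⟩; simp))]
    · rw [← add_assoc n d 1]
      omega
    · rw [Set.disjoint_left]
      rintro _ ⟨-, hlen⟩ ⟨i, -, -, rfl⟩
      simp at hlen
    · rw [Set.disjoint_left]
      rintro r ⟨-, h₁⟩ ⟨-, h₂⟩
      omega

lemma IsCSRote.exists_returnWord_of_nonReturning (h : IsCSRote s) {d i : ℕ}
    (hi : i ∈ nonReturning s n d) : ∃ r ∈ ReturnWords s (factorAt s 0 n), d < r.length := by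
  classical
  obtain ⟨m, hm, hrec⟩ := h.prefix_recurs (i + n)
  have hex : ∃ e, ∀ k < n, s (i + (e + 1) + k) = s k := by
    refine ⟨m - 1, fun k hk => ?_⟩
    rw [← hi.1 k hk, ← hrec (i + k) (by omega)]
    congr 1; omega
  refine ⟨factorAt s i (Nat.find hex + 1), mem_returnWords_iff.2
    ⟨Nat.find hex, i, ⟨hi.1, fun t h₁ h₂ => ?_⟩, Nat.find_spec hex, rfl⟩, ?_⟩
  · have := Nat.find_min hex (m := t - 1) (by omega)
    rwa [Nat.sub_add_cancel h₁] at this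
  · rw [length_factorAt]
    by_contra! hle
    exact hi.2 _ (by omega) hle (Nat.find_spec hex)

end ReturnWords

/-- every non-empty prefix of a complementary symmetric Rote sequence has
exactly three distinct return words. -/
theorem rote_three_return_words (v : ℕ → ZMod 2) (hrote : IsCSRote v) :
    ∀ n, 1 ≤ n → (ReturnWords v (List.ofFn fun i : Fin n => v i)).ncard = 3 := by
  intro n hn
  have hw : (List.ofFn fun i : Fin n => v i) = factorAt v 0 n := by simp [factorAt]
  rw [hw]
  have hB := hrote.ncard_branchWords hn
  have hBfin : (branchWords v n).Finite := Set.finite_of_ncard_ne_zero (by omega)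
  have hfin : (ReturnWords v (factorAt v 0 n)).Finite := by
    by_contra hinf
    obtain ⟨T, hT, hcard⟩ := Set.Infinite.exists_subset_card_eq hinf 4
    have hsub : (T : Set Word) ⊆
        {r ∈ ReturnWords v (factorAt v 0 n) | r.length ≤ T.sup List.length} :=
      fun r hr => ⟨hT hr, Finset.le_sup (f := List.length) hr⟩
    have h₁ := Set.ncard_le_ncard hsub (finite_of_length_le fun r hr => hr.2)
    rw [Set.ncard_coe_finset, hcard] at h₁
    have h₂ := ncard_nonReturning_add_ncard_returnWords (s := v) (n := n) (T.sup List.length)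
    have h₃ := Set.ncard_le_ncard
      (Set.sep_subset (branchWords v n) (·.length < n + T.sup List.length)) hBfin
    omega
  obtain ⟨D, hD⟩ := (hfin.image List.length).bddAbove
  obtain ⟨D', hD'⟩ := (hBfin.image List.length).bddAbove
  have hcount := ncard_nonReturning_add_ncard_returnWords (s := v) (n := n) (D + D' + 1)
  have hempty : nonReturning v n (D + D' + 1) = ∅ := by
    refine Set.eq_empty_of_forall_notMem fun i hi => ?_
    obtain ⟨r, hr, hlen⟩ := hrote.exists_returnWord_of_nonReturning hi
    have := hD (Set.mem_image_of_mem _ hr)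
    omega
  have hret : {r ∈ ReturnWords v (factorAt v 0 n) | r.length ≤ D + D' + 1} =
      ReturnWords v (factorAt v 0 n) :=
    Set.sep_eq_self_iff_mem_true.2 fun r hr => by
      have := hD (Set.mem_image_of_mem _ hr)
      omega
  have hbranch : {y ∈ branchWords v n | y.length < n + (D + D' + 1)} = branchWords v n :=
    Set.sep_eq_self_iff_mem_true.2 fun y hy => by
      have := hD' (Set.mem_image_of_mem _ hy)
      omega
  rw [hempty, hret, hbranch, hB] at hcount
  simpa using hcount
end

section
/- A complementary symmetric Rote sequence v is not a fixed point of any primitive morphism over {0,1}. In particular, it suffices to show: if v is fixed by a primitive morphism ψ over {0,1} and the frequencies of both letters in v equal 1/2, then the dominant eigenvalue of the incidence matrix of ψ is a positive integer; and that every derivated sequence of v is a 3iet sequence with irrational letter frequencies whose fixing morphism (if it exists) would need an irrational dominant eigenvalue in the spectrum of M_ψ — a contradiction. -/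
/-- The sequence `t` is the image of `s` under the substitution `φ`. -/
def SubstImage (φ : ZMod 2 → Word) (s t : ℕ → ZMod 2) : Prop :=
  ∀ n, ∃ k, (List.ofFn fun i : Fin n => t i) <+:
              ((List.ofFn fun i : Fin k => s i).flatMap φ)

/-- The incidence matrix of a morphism over `{0,1}`: `(M_ψ)_{ab} = |ψ(a)|_b`. -/
def IncMat (ψ : ZMod 2 → Word) : Matrix (ZMod 2) (ZMod 2) ℕ :=
  Matrix.of fun a b => (ψ a).count b

/-- `ψ` is a primitive morphism: some power of its incidence matrix is positive. -/
def PrimitiveMorphism (ψ : ZMod 2 → Word) : Prop :=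
  ∃ k, 0 < k ∧ ∀ a b, 0 < ((IncMat ψ) ^ k) a b

namespace RoteFixed

open Finset

/-- The window of length `n` of `s` starting at position `m`. -/
def win (s : ℕ → ZMod 2) (m n : ℕ) : Word := List.ofFn fun i : Fin n => s (m + i)

@[simp] lemma length_win (s : ℕ → ZMod 2) (m n : ℕ) : (win s m n).length = n := by
  simp [win]

lemma getElem_win (s : ℕ → ZMod 2) (m n i : ℕ) (h : i < (win s m n).length) :
    (win s m n)[i] = s (m + i) := by
  simp [win]

@[simp] lemma win_zero (s : ℕ → ZMod 2) (m : ℕ) : win s m 0 = [] := by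
  simp [win]

lemma win_add (s : ℕ → ZMod 2) (m a b : ℕ) :
    win s m (a + b) = win s m a ++ win s (m + a) b := by
  refine List.ext_getElem (by simp) fun i h₁ h₂ => ?_
  rw [List.getElem_append]
  split_ifs with h
  · simp only [getElem_win]
  · simp only [getElem_win, length_win] at h ⊢
    congr 1
    omega

lemma win_one (s : ℕ → ZMod 2) (m : ℕ) : win s m 1 = [s m] := by
  simp [win]

lemma win_succ (s : ℕ → ZMod 2) (m n : ℕ) : win s m (n + 1) = win s m n ++ [s (m + n)] := by
  rw [win_add, win_one]

lemma win_succ' (s : ℕ → ZMod 2) (m n : ℕ) : win s m (n + 1) = s m :: win s (m + 1) n := by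
  rw [add_comm, win_add, win_one, List.singleton_append]

lemma win_eq_win_iff {s : ℕ → ZMod 2} {m m' n : ℕ} :
    win s m n = win s m' n ↔ ∀ i < n, s (m + i) = s (m' + i) := by
  constructor
  · intro h i hi
    have := List.getElem_of_eq h (i := i) (by simpa using hi)
    simpa only [getElem_win] using this
  · intro h
    refine List.ext_getElem (by simp) fun i h₁ h₂ => ?_
    simp only [getElem_win]
    exact h i (by simpa using h₁)

lemma isFactor_iff {s : ℕ → ZMod 2} {w : Word} :
    IsFactor s w ↔ ∃ m, win s m w.length = w := by
  simp only [IsFactor, OccAt, win, eq_comm]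

lemma isFactor_win (s : ℕ → ZMod 2) (m n : ℕ) : IsFactor s (win s m n) :=
  isFactor_iff.2 ⟨m, by simp⟩

/-- `ψ` maps every prefix of `v` to a prefix of `v`. -/
def FixesPrefixes (ψ : ZMod 2 → Word) (v : ℕ → ZMod 2) : Prop :=
  ∀ k, ∃ k', (win v 0 k).flatMap ψ = win v 0 k'

lemma win_prefix_win (s : ℕ → ZMod 2) (m : ℕ) {a b : ℕ} (h : a ≤ b) :
    win s m a <+: win s m b := by
  obtain ⟨c, rfl⟩ := Nat.exists_eq_add_of_le h
  rw [win_add]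
  exact List.prefix_append _ _

lemma flatMap_prefix_flatMap (ψ : ZMod 2 → Word) {x y : Word} (h : x <+: y) :
    x.flatMap ψ <+: y.flatMap ψ := by
  obtain ⟨z, rfl⟩ := h
  rw [List.flatMap_append]
  exact List.prefix_append _ _

lemma SubstImage.fixesPrefixes {ψ : ZMod 2 → Word} {v : ℕ → ZMod 2} (h : SubstImage ψ v v) :
    FixesPrefixes ψ v := by
  intro k
  refine ⟨((win v 0 k).flatMap ψ).length, ?_⟩
  obtain ⟨k', hk'⟩ := h ((win v 0 k).flatMap ψ).length
  have hk : win v 0 ((win v 0 k).flatMap ψ).length <+: (win v 0 k').flatMap ψ := by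
    simpa only [win, zero_add] using hk'
  have hlen := length_win v 0 ((win v 0 k).flatMap ψ).length
  rcases le_total k k' with hle | hle
  · have := flatMap_prefix_flatMap ψ (win_prefix_win v 0 hle)
    exact (List.prefix_of_prefix_length_le this hk hlen.ge).eq_of_length hlen.symm
  · have := flatMap_prefix_flatMap ψ (win_prefix_win v 0 hle)
    exact ((hk.trans this).eq_of_length hlen).symm

lemma FixesPrefixes.comp {ψ φ : ZMod 2 → Word} {v : ℕ → ZMod 2} (hψ : FixesPrefixes ψ v)
    (hφ : FixesPrefixes φ v) : FixesPrefixes (fun a => (ψ a).flatMap φ) v := by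
  intro k
  obtain ⟨k', h'⟩ := hψ k
  obtain ⟨k'', h''⟩ := hφ k'
  exact ⟨k'', by rw [← List.flatMap_assoc, h', h'']⟩

lemma count_flatMap_eq_sum (ψ : ZMod 2 → Word) (w : Word) (b : ZMod 2) :
    (w.flatMap ψ).count b = ∑ a, w.count a * (ψ a).count b := by
  induction w with
  | nil => simp
  | cons c w ih =>
    simp only [List.flatMap_cons, List.count_append, ih, List.count_cons, add_mul,
      Finset.sum_add_distrib]
    simp [add_comm]

lemma incMat_comp (ψ φ : ZMod 2 → Word) :
    IncMat (fun a => (ψ a).flatMap φ) = IncMat ψ * IncMat φ := by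
  ext a b
  simp [IncMat, Matrix.mul_apply, count_flatMap_eq_sum]

lemma FixesPrefixes.exists_incMat_eq_pow {ψ : ZMod 2 → Word} {v : ℕ → ZMod 2}
    (h : FixesPrefixes ψ v) (k : ℕ) : ∃ φ, FixesPrefixes φ v ∧ IncMat φ = IncMat ψ ^ k := by
  induction k with
  | zero =>
    refine ⟨fun a => [a], fun k => ⟨k, by simp⟩, ?_⟩
    ext a b
    simp [IncMat, Matrix.one_apply, List.count_singleton]
  | succ k ih =>
    obtain ⟨φ, hφ, hM⟩ := ih
    exact ⟨_, hφ.comp h, by rw [incMat_comp, hM, pow_succ]⟩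

/-- The length of the image under `ψ` of the prefix of length `n` of `v`. -/
def blockStart (ψ : ZMod 2 → Word) (v : ℕ → ZMod 2) (n : ℕ) : ℕ :=
  ∑ i ∈ range n, (ψ (v i)).length

lemma blockStart_succ (ψ : ZMod 2 → Word) (v : ℕ → ZMod 2) (n : ℕ) :
    blockStart ψ v (n + 1) = blockStart ψ v n + (ψ (v n)).length :=
  sum_range_succ _ _

lemma length_flatMap_win (ψ : ZMod 2 → Word) (v : ℕ → ZMod 2) (n : ℕ) :
    ((win v 0 n).flatMap ψ).length = blockStart ψ v n := by
  induction n with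
  | zero => simp [blockStart]
  | succ n ih => simp [win_succ, blockStart_succ, ih]

lemma FixesPrefixes.win_blockStart {ψ : ZMod 2 → Word} {v : ℕ → ZMod 2}
    (h : FixesPrefixes ψ v) (n : ℕ) :
    win v (blockStart ψ v n) (ψ (v n)).length = ψ (v n) := by
  have key : ∀ k, (win v 0 k).flatMap ψ = win v 0 (blockStart ψ v k) := by
    intro k
    obtain ⟨k', hk'⟩ := h k
    have := congrArg List.length hk'
    rw [length_flatMap_win, length_win] at this
    rw [hk', this]
  have h₁ := key (n + 1)
  rw [win_succ, List.flatMap_append, key n, blockStart_succ, win_add, zero_add, zero_add] at h₁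
  simpa using (List.append_cancel_left h₁).symm

/-- `ψ` fixes `v` blockwise and both letters occur in both images. -/
structure PositivelyFixed (ψ : ZMod 2 → Word) (v : ℕ → ZMod 2) : Prop where
  win_blockStart : ∀ n, win v (blockStart ψ v n) (ψ (v n)).length = ψ (v n)
  mem : ∀ a b, b ∈ ψ a

lemma exists_positivelyFixed {ψ : ZMod 2 → Word} {v : ℕ → ZMod 2} (hψ : PrimitiveMorphism ψ)
    (h : SubstImage ψ v v) : ∃ φ, PositivelyFixed φ v := by
  obtain ⟨k, -, hk⟩ := hψ
  obtain ⟨φ, hφ, hM⟩ := (SubstImage.fixesPrefixes h).exists_incMat_eq_pow k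
  refine ⟨φ, hφ.win_blockStart, fun a b => ?_⟩
  have := hk a b
  rw [← hM] at this
  exact List.count_pos_iff.1 this

/-- The sign `1` or `-1` attached to a letter. -/
def sgn (a : ZMod 2) : ℤ := if a = 0 then 1 else -1

lemma zmod_two_cases (a : ZMod 2) : a = 0 ∨ a = 1 := by
  revert a; decide

lemma eq_or_eq_of_ne {b t : ZMod 2} (h : t ≠ b) (c : ZMod 2) : c = b ∨ c = t := by
  revert b t c; decide

lemma eq_or_eq_add_one (a b : ZMod 2) : a = b ∨ a = b + 1 := by
  revert a b; decide

lemma sgn_add (a b : ZMod 2) : sgn (a + b) = sgn a * sgn b := by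
  revert a b; decide

lemma sgn_add_one (a : ZMod 2) : sgn (a + 1) = -sgn a := by
  revert a; decide

lemma abs_sgn (a : ZMod 2) : |sgn a| = 1 := by
  revert a; decide

/-- The sum of the signs of the first `n` letters. -/
def signSum (s : ℕ → ZMod 2) (n : ℕ) : ℤ := ∑ i ∈ range n, sgn (s i)

lemma signSum_succ (s : ℕ → ZMod 2) (n : ℕ) : signSum s (n + 1) = signSum s n + sgn (s n) :=
  sum_range_succ _ _

lemma sum_map_sgn_win (s : ℕ → ZMod 2) (m n : ℕ) :
    ((win s m n).map sgn).sum = signSum s (m + n) - signSum s m := by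
  induction n with
  | zero => simp
  | succ n ih =>
    rw [win_succ, List.map_append, List.sum_append, ih, ← add_assoc, signSum_succ]
    simp
    ring

lemma abs_sum_map_sgn_le (w : Word) : |(w.map sgn).sum| ≤ w.length := by
  induction w with
  | nil => simp
  | cons a w ih =>
    have := abs_sgn a
    simp only [List.map_cons, List.sum_cons, List.length_cons]
    push_cast
    exact (abs_add_le _ _).trans (by omega)

lemma abs_signSum_sub_le (s : ℕ → ZMod 2) (m n : ℕ) :
    |signSum s (m + n) - signSum s m| ≤ n := by
  rw [← sum_map_sgn_win]
  simpa using abs_sum_map_sgn_le (win s m n)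

lemma two_sub_length_le_of_mem {w : Word} {b : ZMod 2} (hb : b ∈ w) :
    2 - (w.length : ℤ) ≤ sgn b * (w.map sgn).sum := by
  induction w with
  | nil => simp at hb
  | cons c w ih =>
    have hw := abs_le.1 (abs_sum_map_sgn_le w)
    simp only [List.map_cons, List.sum_cons, List.length_cons]
    push_cast
    rcases List.mem_cons.1 hb with rfl | hb
    · rcases zmod_two_cases b with rfl | rfl <;> simp [sgn] <;> omega
    · have := ih hb
      rcases zmod_two_cases b with rfl | rfl <;> rcases zmod_two_cases c with rfl | rfl <;>
        simp [sgn] at this ⊢ <;> omega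

lemma abs_sum_map_sgn_le_sub_two {w : Word} (h : ∀ b, b ∈ w) :
    |(w.map sgn).sum| ≤ w.length - 2 := by
  have h₀ := two_sub_length_le_of_mem (h 0)
  have h₁ := two_sub_length_le_of_mem (h 1)
  simp only [sgn, if_true, one_ne_zero, if_false] at h₀ h₁
  exact abs_le.2 ⟨by linarith, by linarith⟩

lemma two_mul_sum_range (s : ℕ → ZMod 2) (f : ZMod 2 → ℤ) (n : ℕ) :
    2 * ∑ i ∈ range n, f (s i) = (f 0 + f 1) * n + (f 0 - f 1) * signSum s n := by
  induction n with
  | zero => simp [signSum]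
  | succ n ih =>
    rw [sum_range_succ, mul_add, ih, signSum_succ]
    push_cast
    rcases zmod_two_cases (s n) with h | h <;> rw [h] <;> simp [sgn] <;> ring

namespace PositivelyFixed

variable {ψ : ZMod 2 → Word} {v : ℕ → ZMod 2}

lemma two_le_length (h : PositivelyFixed ψ v) (a : ZMod 2) : 2 ≤ (ψ a).length := by
  have := (abs_nonneg _).trans (abs_sum_map_sgn_le_sub_two (h.mem a))
  omega

lemma two_mul_blockStart (ψ : ZMod 2 → Word) (v : ℕ → ZMod 2) (n : ℕ) :
    2 * (blockStart ψ v n : ℤ) = ((ψ 0).length + (ψ 1).length) * n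
      + ((ψ 0).length - (ψ 1).length) * signSum v n := by
  rw [← two_mul_sum_range v (fun a => ((ψ a).length : ℤ)), blockStart]
  push_cast
  rfl

lemma two_mul_blockStart_real (ψ : ZMod 2 → Word) (v : ℕ → ZMod 2) (n : ℕ) :
    2 * (blockStart ψ v n : ℝ) = ((ψ 0).length + (ψ 1).length) * n
      + ((ψ 0).length - (ψ 1).length) * signSum v n := by
  have := congrArg (Int.cast : ℤ → ℝ) (two_mul_blockStart ψ v n)
  push_cast at this
  exact this

lemma length_le (ψ : ZMod 2 → Word) (a : ZMod 2) :
    (ψ a).length ≤ (ψ 0).length + (ψ 1).length := by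
  rcases zmod_two_cases a with rfl | rfl <;> omega

lemma blockStart_strictMono (h : PositivelyFixed ψ v) : StrictMono (blockStart ψ v) :=
  strictMono_nat_of_lt_succ fun n => by
    have := h.two_le_length (v n)
    rw [blockStart_succ]
    omega

lemma two_mul_le_blockStart (h : PositivelyFixed ψ v) (n : ℕ) : 2 * n ≤ blockStart ψ v n := by
  induction n with
  | zero => simp
  | succ n ih =>
    have := h.two_le_length (v n)
    rw [blockStart_succ]
    omega

lemma exists_block (h : PositivelyFixed ψ v) (m : ℕ) :
    ∃ i, blockStart ψ v i ≤ m ∧ m < blockStart ψ v (i + 1) := by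
  induction m with
  | zero => exact ⟨0, by simp [blockStart], by
      have := h.two_mul_le_blockStart (0 + 1)
      omega⟩
  | succ m ih =>
    obtain ⟨i, h₁, h₂⟩ := ih
    rcases (Nat.succ_le_of_lt h₂).lt_or_eq with hlt | heq
    · exact ⟨i, by omega, hlt⟩
    · exact ⟨i + 1, heq.ge, by
        have := h.blockStart_strictMono (Nat.lt_add_one (i + 1))
        omega⟩

lemma two_mul_signSum_blockStart (h : PositivelyFixed ψ v) (n : ℕ) :
    2 * signSum v (blockStart ψ v n)
      = (((ψ 0).map sgn).sum + ((ψ 1).map sgn).sum) * n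
        + (((ψ 0).map sgn).sum - ((ψ 1).map sgn).sum) * signSum v n := by
  rw [← two_mul_sum_range v (fun a => ((ψ a).map sgn).sum)]
  congr 1
  induction n with
  | zero => simp [blockStart, signSum]
  | succ n ih =>
    rw [sum_range_succ, ← ih]
    conv_rhs => rw [← h.win_blockStart n, sum_map_sgn_win]
    rw [blockStart_succ]
    ring

lemma two_mul_signSum_blockStart_real (h : PositivelyFixed ψ v) (n : ℕ) :
    2 * (signSum v (blockStart ψ v n) : ℝ)
      = ((((ψ 0).map sgn).sum : ℤ) + (((ψ 1).map sgn).sum : ℤ)) * n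
        + ((((ψ 0).map sgn).sum : ℤ) - (((ψ 1).map sgn).sum : ℤ)) * signSum v n := by
  have := congrArg (Int.cast : ℤ → ℝ) (h.two_mul_signSum_blockStart n)
  simpa only [Int.cast_mul, Int.cast_add, Int.cast_sub, Int.cast_ofNat, Int.cast_natCast]
    using this

end PositivelyFixed

/-- A function that is `o(n)`. -/
def Sublinear (g : ℕ → ℝ) : Prop := ∀ ε > 0, ∃ C, ∀ n : ℕ, |g n| ≤ ε * n + C

lemma exists_le_of_contraction {P : ℝ → Prop} {c h₀ : ℝ} (hc₀ : 0 ≤ c) (hc₁ : c < 1)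
    (hh₀ : 0 ≤ h₀) (hP : P h₀) (step : ∀ h, 0 ≤ h → h ≤ h₀ → P h → P (c * h))
    {ε : ℝ} (hε : 0 < ε) : ∃ h ≤ ε, P h := by
  have key : ∀ k : ℕ, P (c ^ k * h₀) := by
    intro k
    induction k with
    | zero => simpa using hP
    | succ k ih =>
      rw [pow_succ', mul_assoc]
      exact step _ (by positivity) (mul_le_of_le_one_left hh₀ (pow_le_one₀ hc₀ hc₁.le)) ih
  obtain ⟨k, hk⟩ := exists_pow_lt_of_lt_one (show 0 < ε / (h₀ + 1) by positivity) hc₁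
  refine ⟨_, ?_, key k⟩
  rw [lt_div_iff₀ (by positivity)] at hk
  nlinarith [pow_nonneg hc₀ k]

lemma exists_sign_contraction {l₀ l₁ p q h : ℝ} (hp : |p| ≤ l₀ - 2) (hq : |q| ≤ l₁ - 2)
    (h₀ : 0 ≤ h) (h₁ : h ≤ 1) : ∃ s : ℝ, (s = 1 ∨ s = -1) ∧
      s * (p + q) - h * (l₀ + l₁) + h * |s * (p - q) - h * (l₀ - l₁)| ≤ -4 * h := by
  by_contra! hcon
  have e := hcon 1 (Or.inl rfl)
  have e' := hcon (-1) (Or.inr rfl)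
  obtain ⟨hp₁, hp₂⟩ := abs_le.1 hp
  obtain ⟨hq₁, hq₂⟩ := abs_le.1 hq
  have a₁ := mul_nonneg h₀ (sub_nonneg.2 hp₁)
  have a₂ := mul_nonneg h₀ (sub_nonneg.2 hp₂)
  have a₃ := mul_nonneg h₀ (sub_nonneg.2 hq₁)
  have a₄ := mul_nonneg h₀ (sub_nonneg.2 hq₂)
  have b₁ := mul_nonneg (mul_nonneg h₀ (sub_nonneg.2 h₁)) (show 0 ≤ l₀ - 2 by linarith)
  have b₂ := mul_nonneg (mul_nonneg h₀ (sub_nonneg.2 h₁)) (show 0 ≤ l₁ - 2 by linarith)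
  have b₃ := mul_nonneg (mul_nonneg h₀ h₀) (show 0 ≤ l₀ - 2 by linarith)
  have b₄ := mul_nonneg (mul_nonneg h₀ h₀) (show 0 ≤ l₁ - 2 by linarith)
  rcases abs_cases (1 * (p - q) - h * (l₀ - l₁)) with ⟨r, -⟩ | ⟨r, -⟩ <;>
  rcases abs_cases (-1 * (p - q) - h * (l₀ - l₁)) with ⟨r', -⟩ | ⟨r', -⟩ <;>
  rw [r] at e <;> rw [r'] at e' <;> nlinarith

lemma sign_bound_of_block {l₀ l₁ p q h C s x y X Y : ℝ} (hT : 0 < l₀ + l₁) (hl₀ : 0 ≤ l₀)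
    (hl₁ : 0 ≤ l₁) (h₀ : 0 ≤ h)
    (hstep : s * (p + q) - h * (l₀ + l₁) + h * |s * (p - q) - h * (l₀ - l₁)| ≤ -4 * h)
    (hy : |y| ≤ h * x + C) (hyx : |y| ≤ x) (hX : 2 * X = (l₀ + l₁) * x + (l₀ - l₁) * y)
    (hY : 2 * Y = (p + q) * x + (p - q) * y) :
    s * Y ≤ (1 - 2 / (l₀ + l₁)) * h * X + C * |s * (p - q) - h * (l₀ - l₁)| / 2 := by
  have hx₀ : 0 ≤ x := (abs_nonneg y).trans hyx
  have hXT : X ≤ (l₀ + l₁) * x := by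
    obtain ⟨y₁, y₂⟩ := abs_le.1 hyx
    nlinarith [mul_nonneg hl₀ (sub_nonneg.2 y₂), mul_nonneg hl₁ (sub_nonneg.2 y₁)]
  have hyb : y * (s * (p - q) - h * (l₀ - l₁)) ≤ (h * x + C) * |s * (p - q) - h * (l₀ - l₁)| :=
    (le_abs_self _).trans
      (by rw [abs_mul]; exact mul_le_mul_of_nonneg_right hy (abs_nonneg _))
  have hsY : 2 * (s * Y) = x * (s * (p + q) - h * (l₀ + l₁))
      + y * (s * (p - q) - h * (l₀ - l₁)) + 2 * (h * X) := by
    linear_combination s * hY - h * hX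
  have hxstep := mul_le_mul_of_nonneg_right hstep hx₀
  have hhx : 2 / (l₀ + l₁) * (h * X) ≤ 2 * h * x := by
    rw [div_mul_eq_mul_div, div_le_iff₀ hT]
    linarith [mul_le_mul_of_nonneg_left hXT h₀]
  linarith

lemma exists_complement {v : ℕ → ZMod 2} (hE : ∀ w : Word, IsFactor v w → IsFactor v (Ex w))
    (m n : ℕ) : ∃ m', ∀ i < n, v (m' + i) = v (m + i) + 1 := by
  obtain ⟨m', hm'⟩ := isFactor_iff.1 (hE _ (isFactor_win v m n))
  refine ⟨m', fun i hi => ?_⟩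
  have := List.getElem_of_eq hm' (i := i) (by simpa [Ex] using hi)
  simpa [getElem_win, Ex] using this

lemma signSum_add (s : ℕ → ZMod 2) (m n : ℕ) :
    signSum s (m + n) = signSum s m + ∑ i ∈ range n, sgn (s (m + i)) :=
  sum_range_add _ _ _

lemma exists_signSum_neg {v : ℕ → ZMod 2} (hE : ∀ w : Word, IsFactor v w → IsFactor v (Ex w))
    (m n : ℕ) : ∃ m', signSum v (m' + n) - signSum v m' = -(signSum v (m + n) - signSum v m) := by
  obtain ⟨m', hm'⟩ := exists_complement hE m n
  refine ⟨m', ?_⟩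
  rw [signSum_add, signSum_add, add_sub_cancel_left, add_sub_cancel_left, ← sum_neg_distrib]
  refine sum_congr rfl fun i hi => ?_
  rw [hm' i (mem_range.1 hi), sgn_add_one]

/-- The signed letter discrepancy of every factor of `v` is at most `h` times its length,
up to an additive constant. -/
def SignSlopeLE (v : ℕ → ZMod 2) (h : ℝ) : Prop :=
  ∃ C, 0 ≤ C ∧ ∀ m n : ℕ, |((signSum v (m + n) - signSum v m : ℤ) : ℝ)| ≤ h * n + C

namespace PositivelyFixed

variable {ψ : ZMod 2 → Word} {v : ℕ → ZMod 2}

lemma signSlopeLE_contract (hv : PositivelyFixed ψ v)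
    (hE : ∀ w : Word, IsFactor v w → IsFactor v (Ex w)) {h : ℝ} (h₀ : 0 ≤ h) (h₁ : h ≤ 1)
    (H : SignSlopeLE v h) :
    SignSlopeLE v ((1 - 2 / ((ψ 0).length + (ψ 1).length)) * h) := by
  obtain ⟨C, hC₀, hC⟩ := H
  set l₀ : ℝ := ((ψ 0).length : ℝ) with hl₀
  set l₁ : ℝ := ((ψ 1).length : ℝ) with hl₁
  set p : ℝ := ((((ψ 0).map sgn).sum : ℤ) : ℝ) with hp
  set q : ℝ := ((((ψ 1).map sgn).sum : ℤ) : ℝ) with hq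
  have hp2 : |p| ≤ l₀ - 2 := by
    have := (Int.cast_le (R := ℝ)).2 (abs_sum_map_sgn_le_sub_two (hv.mem 0))
    push_cast at this
    simpa only [hp, hl₀, Int.cast_list_sum, List.map_map] using this
  have hq2 : |q| ≤ l₁ - 2 := by
    have := (Int.cast_le (R := ℝ)).2 (abs_sum_map_sgn_le_sub_two (hv.mem 1))
    push_cast at this
    simpa only [hq, hl₁, Int.cast_list_sum, List.map_map] using this
  have hl₀2 : 2 ≤ l₀ := by linarith [abs_nonneg p]
  have hl₁2 : 2 ≤ l₁ := by linarith [abs_nonneg q]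
  obtain ⟨s, hs, hstep⟩ := exists_sign_contraction hp2 hq2 h₀ h₁
  set b : ℝ := s * (p - q) - h * (l₀ - l₁) with hb
  set T : ℝ := l₀ + l₁ with hT
  set c : ℝ := 1 - 2 / T with hc
  have hT0 : 0 < T := by linarith
  have hc₀ : 0 ≤ c := by
    rw [hc, sub_nonneg, div_le_one hT0]; linarith
  have key : ∀ m n : ℕ, s * ((signSum v (m + n) - signSum v m : ℤ) : ℝ)
      ≤ c * h * n + (c * h * T + C * |b| / 2 + 2 * T) := by
    intro m n
    obtain ⟨i, hi₁, hi₂⟩ := hv.exists_block m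
    obtain ⟨j, hj₁, hj₂⟩ := hv.exists_block (m + n)
    have hij : i ≤ j := by
      by_contra! hlt
      have := hv.blockStart_strictMono.monotone (Nat.succ_le_of_lt hlt)
      simp only [Nat.succ_eq_add_one] at this
      omega
    obtain ⟨x, rfl⟩ := Nat.exists_eq_add_of_le hij
    rw [blockStart_succ] at hi₂ hj₂
    have hTi := length_le ψ (v i)
    have hTj := length_le ψ (v (i + x))
    obtain ⟨a, ha⟩ := Nat.exists_eq_add_of_le hi₁
    obtain ⟨d, hd⟩ := Nat.exists_eq_add_of_le hj₁
    have da := abs_signSum_sub_le v (blockStart ψ v i) a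
    have dd := abs_signSum_sub_le v (blockStart ψ v (i + x)) d
    rw [← ha] at da
    rw [← hd] at dd
    have haT : (a : ℝ) ≤ T := by
      rw [hT, hl₀, hl₁]; exact_mod_cast (by omega : a ≤ (ψ 0).length + (ψ 1).length)
    have hdT : (d : ℝ) ≤ T := by
      rw [hT, hl₀, hl₁]; exact_mod_cast (by omega : d ≤ (ψ 0).length + (ψ 1).length)
    have da' : |(signSum v m : ℝ) - signSum v (blockStart ψ v i)| ≤ a := by exact_mod_cast da
    have dd' : |(signSum v (m + n) : ℝ) - signSum v (blockStart ψ v (i + x))| ≤ d := by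
      exact_mod_cast dd
    have hy := hC i x
    have hyx : |((signSum v (i + x) - signSum v i : ℤ) : ℝ)| ≤ x := by
      exact_mod_cast abs_signSum_sub_le v i x
    set y : ℝ := ((signSum v (i + x) - signSum v i : ℤ) : ℝ) with hydef
    have hX : 2 * ((blockStart ψ v (i + x) : ℝ) - blockStart ψ v i)
        = (l₀ + l₁) * x + (l₀ - l₁) * y := by
      have e₁ := two_mul_blockStart_real ψ v (i + x)
      have e₂ := two_mul_blockStart_real ψ v i
      rw [hydef]
      push_cast at e₁ ⊢
      linarith
    have hY : 2 * ((signSum v (blockStart ψ v (i + x)) : ℝ) - signSum v (blockStart ψ v i))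
        = (p + q) * x + (p - q) * y := by
      have e₁ := hv.two_mul_signSum_blockStart_real (i + x)
      have e₂ := hv.two_mul_signSum_blockStart_real i
      rw [← hp, ← hq] at e₁ e₂
      rw [hydef, Int.cast_sub]
      rw [Nat.cast_add] at e₁
      linarith
    set X : ℝ := (blockStart ψ v (i + x) : ℝ) - blockStart ψ v i with hXdef
    set Y : ℝ := (signSum v (blockStart ψ v (i + x)) : ℝ) - signSum v (blockStart ψ v i) with hYdef
    have hXn : X ≤ n + T := by
      have e₁ : (m : ℝ) = blockStart ψ v i + a := by exact_mod_cast ha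
      have e₂ : (m : ℝ) + n = blockStart ψ v (i + x) + d := by exact_mod_cast hd
      rw [hXdef]
      linarith [(Nat.cast_nonneg d : (0 : ℝ) ≤ d)]
    have hsY := sign_bound_of_block hT0 (by linarith) (by linarith) h₀ hstep hy hyx hX hY
    have hsY' : s * Y ≤ c * h * (n + T) + C * |b| / 2 := by
      have : c * h * X ≤ c * h * (n + T) := mul_le_mul_of_nonneg_left hXn (by positivity)
      linarith
    have hdiff : s * ((signSum v (m + n) - signSum v m : ℤ) : ℝ) ≤ s * Y + 2 * T := by
      obtain ⟨u₁, u₂⟩ := abs_le.1 da'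
      obtain ⟨w₁, w₂⟩ := abs_le.1 dd'
      push_cast
      rcases hs with rfl | rfl <;> rw [hYdef] <;> linarith
    linarith
  refine ⟨c * h * T + C * |b| / 2 + 2 * T, by positivity, fun m n => ?_⟩
  obtain ⟨m', hm'⟩ := exists_signSum_neg hE m n
  have k₁ := key m n
  have k₂ := key m' n
  rw [hm', Int.cast_neg] at k₂
  rw [abs_le]
  rcases hs with rfl | rfl <;> constructor <;> linarith

lemma sublinear_signSum (hv : PositivelyFixed ψ v)
    (hE : ∀ w : Word, IsFactor v w → IsFactor v (Ex w)) :
    Sublinear fun n => (signSum v n : ℝ) := by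
  intro ε hε
  have l₀ : (2 : ℝ) ≤ (ψ 0).length := by exact_mod_cast hv.two_le_length 0
  have l₁ : (2 : ℝ) ≤ (ψ 1).length := by exact_mod_cast hv.two_le_length 1
  obtain ⟨h, hle, C, -, hC⟩ := exists_le_of_contraction (P := SignSlopeLE v)
    (c := 1 - 2 / ((ψ 0).length + (ψ 1).length))
    (by rw [sub_nonneg, div_le_one (by linarith)]; linarith)
    (by rw [sub_lt_self_iff]; positivity) zero_le_one
    ⟨0, le_rfl, fun m n => by
      rw [one_mul, add_zero]; exact_mod_cast abs_signSum_sub_le v m n⟩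
    (fun h h₀ h₁ => hv.signSlopeLE_contract hE h₀ h₁) hε
  refine ⟨C, fun n => ?_⟩
  have := hC 0 n
  simp only [zero_add, show signSum v 0 = 0 from rfl, sub_zero] at this
  exact this.trans (by gcongr)

end PositivelyFixed

namespace Sublinear

lemma add {f g : ℕ → ℝ} (hf : Sublinear f) (hg : Sublinear g) :
    Sublinear fun n => f n + g n := by
  intro ε hε
  obtain ⟨C, hC⟩ := hf (ε / 2) (by positivity)
  obtain ⟨D, hD⟩ := hg (ε / 2) (by positivity)
  refine ⟨C + D, fun n => (abs_add_le _ _).trans ?_⟩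
  linarith [hC n, hD n]

lemma const_mul {f : ℕ → ℝ} (hf : Sublinear f) (c : ℝ) : Sublinear fun n => c * f n := by
  intro ε hε
  obtain ⟨C, hC⟩ := hf (ε / (|c| + 1)) (by positivity)
  refine ⟨|c| * C, fun n => ?_⟩
  have h := mul_le_mul_of_nonneg_left (hC n) (abs_nonneg c)
  have h' : |c| * (ε / (|c| + 1)) ≤ ε := by
    rw [mul_div_assoc', div_le_iff₀ (by positivity)]
    nlinarith
  rw [abs_mul]
  nlinarith [mul_le_mul_of_nonneg_right h' (Nat.cast_nonneg (α := ℝ) n)]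

lemma of_bounded {f : ℕ → ℝ} {C : ℝ} (hf : ∀ n, |f n| ≤ C) : Sublinear f :=
  fun ε hε => ⟨C, fun n => (hf n).trans (le_add_of_nonneg_left (by positivity))⟩

lemma sum {ι : Type*} {F : Finset ι} {f : ι → ℕ → ℝ} (hf : ∀ i ∈ F, Sublinear (f i)) :
    Sublinear fun n => ∑ i ∈ F, f i n := by
  induction F using Finset.cons_induction with
  | empty => exact of_bounded (C := 0) (by simp)
  | cons a F ha ih =>
    simp only [sum_cons]
    exact (hf a (mem_cons_self a F)).add (ih fun i hi => hf i (mem_cons_of_mem hi))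

lemma not_forall_le {g : ℕ → ℝ} (hg : Sublinear g) {c : ℝ} (hc : 0 < c) (G : ℕ) :
    ¬ ∀ m : ℕ, c * m ≤ |g (m * G)| := by
  intro h
  obtain ⟨C, hC⟩ := hg (c / (2 * (G + 1))) (by positivity)
  obtain ⟨m, hm⟩ := exists_nat_gt (2 * C / c)
  have h₁ := (h m).trans (hC (m * G))
  rw [div_lt_iff₀ hc] at hm
  have h₂ : c / (2 * (G + 1)) * ((m * G : ℕ) : ℝ) ≤ c * m / 2 := by
    rw [div_mul_eq_mul_div, div_le_div_iff₀ (by positivity) two_pos]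
    push_cast
    nlinarith [mul_nonneg hc.le (Nat.cast_nonneg (α := ℝ) m)]
  linarith

lemma of_block_contraction {g R : ℕ → ℝ} {L : ℕ → ℕ} {K T : ℝ} (hR : Sublinear R)
    (hg : ∀ m n : ℕ, |g (m + n) - g m| ≤ K * n) (hL : ∀ n, 2 * n ≤ L n)
    (hblock : ∀ m, ∃ i, L i ≤ m ∧ ((m - L i : ℕ) : ℝ) ≤ T)
    (hcontr : ∀ n, |g (L n)| ≤ |g n| + |R n|) : Sublinear g := by
  have hK : 0 ≤ K := by simpa using (abs_nonneg _).trans (hg 0 1)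
  intro ε hε
  have step : ∀ h, 0 ≤ h → h ≤ K → (∃ C, ∀ n : ℕ, |g n| ≤ h * n + C) →
      ∃ C, ∀ n : ℕ, |g n| ≤ 3 / 4 * h * n + C := by
    rintro h h₀ - ⟨C, hC⟩
    rcases h₀.eq_or_lt with rfl | hpos
    · exact ⟨C, by simpa using hC⟩
    obtain ⟨D, hD⟩ := hR (h / 2) (by positivity)
    refine ⟨C + D + K * T, fun m => ?_⟩
    obtain ⟨i, hi, hT⟩ := hblock m
    have h₁ := hg (L i) (m - L i)
    rw [Nat.add_sub_cancel' hi] at h₁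
    have h₂ : |g m| ≤ |g (L i)| + |g m - g (L i)| := by
      simpa using abs_add_le (g (L i)) (g m - g (L i))
    have h₃ : (2 : ℝ) * i ≤ m := by exact_mod_cast (hL i).trans hi
    have h₄ := mul_le_mul_of_nonneg_left hT hK
    have h₅ := mul_le_mul_of_nonneg_left h₃ h₀
    linarith [hC i, hD i, hcontr i]
  obtain ⟨h, hle, C, hC⟩ := exists_le_of_contraction
    (P := fun h => ∃ C, ∀ n : ℕ, |g n| ≤ h * n + C) (c := 3 / 4) (by norm_num) (by norm_num)
    hK ⟨|g 0|, fun n => by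
      have h₁ := hg 0 n
      have h₂ : |g n| ≤ |g 0| + |g n - g 0| := by simpa using abs_add_le (g 0) (g n - g 0)
      rw [zero_add] at h₁
      linarith⟩ step hε
  exact ⟨C, fun n => (hC n).trans (by gcongr)⟩

end Sublinear

/-- The sequence of differences of consecutive letters. -/
def diff (v : ℕ → ZMod 2) (n : ℕ) : ZMod 2 := v n + v (n + 1)

lemma four_mul_sum_range (s : ℕ → ZMod 2) (f g : ZMod 2 → ℤ) (n : ℕ) :
    4 * ∑ i ∈ range n, f (s i) * g (s (i + 1)) = (f 0 + f 1) * (g 0 + g 1) * n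
      + (f 0 - f 1) * (g 0 - g 1) * signSum (diff s) n
      + (f 0 - f 1) * (g 0 + g 1) * signSum s n
      + (f 0 + f 1) * (g 0 - g 1) * (signSum s n + (sgn (s n) - sgn (s 0))) := by
  induction n with
  | zero => simp [signSum]
  | succ n ih =>
    rw [sum_range_succ, mul_add, ih, signSum_succ, signSum_succ, diff]
    push_cast
    rcases zmod_two_cases (s n) with h | h <;> rcases zmod_two_cases (s (n + 1)) with h' | h' <;>
      rw [h, h'] <;> simp [sgn, CharTwo.add_self_eq_zero] <;> ring

namespace PositivelyFixed

variable {ψ : ZMod 2 → Word} {v : ℕ → ZMod 2}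

lemma apply_blockStart_add (h : PositivelyFixed ψ v) (n j : ℕ) (hj : j < (ψ (v n)).length) :
    v (blockStart ψ v n + j) = (ψ (v n)).getD j 0 := by
  have := List.getElem_of_eq (h.win_blockStart n) (i := j) (by simpa using hj)
  rw [getElem_win] at this
  rw [this, List.getD_eq_getElem _ _ hj]

lemma signSum_diff_blockStart (h : PositivelyFixed ψ v) : ∃ Q τ θ : ZMod 2 → ℤ,
    (∀ a, |τ a| = 1) ∧ (∀ a, |θ a| = 1) ∧ ∀ n, signSum (diff v) (blockStart ψ v n)
      = ∑ i ∈ range n, Q (v i) + ∑ i ∈ range n, τ (v i) * θ (v (i + 1)) := by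
  refine ⟨fun a => ∑ j ∈ range ((ψ a).length - 1),
      sgn ((ψ a).getD j 0) * sgn ((ψ a).getD (j + 1) 0),
    fun a => sgn ((ψ a).getD ((ψ a).length - 1) 0), fun a => sgn ((ψ a).getD 0 0),
    fun _ => abs_sgn _, fun _ => abs_sgn _, fun n => ?_⟩
  induction n with
  | zero => simp [blockStart, signSum]
  | succ n ih =>
    have h2 := h.two_le_length (v n)
    have h2' := h.two_le_length (v (n + 1))
    obtain ⟨l, hl⟩ : ∃ l, (ψ (v n)).length = l + 1 := ⟨(ψ (v n)).length - 1, by omega⟩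
    have hlast : v (blockStart ψ v n + l + 1) = (ψ (v (n + 1))).getD 0 0 := by
      rw [← h.apply_blockStart_add (n + 1) 0 (by omega), blockStart_succ, hl]
      rfl
    dsimp only at ih ⊢
    rw [blockStart_succ, signSum_add, ih, sum_range_succ _ n, sum_range_succ _ n, hl,
      sum_range_succ _ l, Nat.add_sub_cancel, diff, sgn_add, hlast,
      h.apply_blockStart_add n l (by omega)]
    have : ∑ x ∈ range l, sgn (diff v (blockStart ψ v n + x)) = ∑ j ∈ range l,
        sgn ((ψ (v n)).getD j 0) * sgn ((ψ (v n)).getD (j + 1) 0) := by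
      refine sum_congr rfl fun j hj => ?_
      have hj := mem_range.1 hj
      rw [diff, sgn_add, add_assoc, h.apply_blockStart_add n j (by omega),
        h.apply_blockStart_add n (j + 1) (by omega)]
    rw [this]
    ring

/-- The letters of the difference sequence have rational frequencies. -/
lemma exists_sublinear_signSum_diff (hv : PositivelyFixed ψ v)
    (hE : ∀ w : Word, IsFactor v w → IsFactor v (Ex w)) : ∃ d e : ℤ, 0 < d ∧
      Sublinear fun n => (d : ℝ) * signSum (diff v) n - e * n := by
  obtain ⟨Q, τ, θ, hτ, hθ, hQ⟩ := hv.signSum_diff_blockStart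
  have hS := hv.sublinear_signSum hE
  set κ : ℤ := (τ 0 - τ 1) * (θ 0 - θ 1) with hκ
  have hκ4 : |κ| ≤ 4 := by
    have h₁ := (abs_sub (τ 0) (τ 1)).trans_eq (by rw [hτ, hτ])
    have h₂ := (abs_sub (θ 0) (θ 1)).trans_eq (by rw [hθ, hθ])
    rw [hκ, abs_mul]
    nlinarith [abs_nonneg (τ 0 - τ 1), abs_nonneg (θ 0 - θ 1)]
  set d : ℤ := 2 * ((ψ 0).length + (ψ 1).length) - κ with hd
  set e : ℤ := 2 * (Q 0 + Q 1) + (τ 0 + τ 1) * (θ 0 + θ 1) with he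
  have hd0 : 0 < d := by
    have h₀ := hv.two_le_length 0
    have h₁ := hv.two_le_length 1
    have := (abs_le.1 hκ4).2
    omega
  refine ⟨d, e, hd0, ?_⟩
  set c₁ : ℤ := d * (2 * (Q 0 - Q 1) + (τ 0 - τ 1) * (θ 0 + θ 1) + (τ 0 + τ 1) * (θ 0 - θ 1))
    - 2 * e * ((ψ 0).length - (ψ 1).length) with hc₁
  set c₂ : ℤ := d * ((τ 0 + τ 1) * (θ 0 - θ 1)) with hc₂
  have key : ∀ n : ℕ, 4 * (d * signSum (diff v) (blockStart ψ v n) - e * blockStart ψ v n)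
      = κ * (d * signSum (diff v) n - e * n)
        + (c₁ * signSum v n + c₂ * (sgn (v n) - sgn (v 0))) := by
    intro n
    have h₁ := two_mul_sum_range v Q n
    have h₂ := four_mul_sum_range v τ θ n
    have h₃ := two_mul_blockStart ψ v n
    rw [hQ n, hc₁, hc₂]
    linear_combination 2 * d * h₁ + d * h₂ - 2 * e * h₃ + (e * n) * hd - (d * n) * he
      - (d * signSum (diff v) n) * hκ
  have hR : Sublinear fun n => 1 / 4 * ((c₁ : ℝ) * signSum v n
      + c₂ * ((sgn (v n) - sgn (v 0) : ℤ) : ℝ)) := by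
    refine ((hS.const_mul c₁).add (Sublinear.const_mul ?_ c₂)).const_mul _
    refine Sublinear.of_bounded (C := 2) fun n => ?_
    have := (abs_sub (sgn (v n)) (sgn (v 0))).trans_eq (by rw [abs_sgn, abs_sgn])
    exact_mod_cast this
  refine Sublinear.of_block_contraction (L := blockStart ψ v) (K := |(d : ℝ)| + |(e : ℝ)|)
    (T := ((ψ 0).length + (ψ 1).length : ℕ)) hR (fun m n => ?_) hv.two_mul_le_blockStart
    (fun m => ?_) fun n => ?_
  · have h₁ : |(signSum (diff v) (m + n) : ℝ) - signSum (diff v) m| ≤ n := by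
      exact_mod_cast abs_signSum_sub_le (diff v) m n
    have h₂ : (d : ℝ) * signSum (diff v) (m + n) - e * ((m + n : ℕ) : ℝ)
        - (d * signSum (diff v) m - e * m)
        = d * (signSum (diff v) (m + n) - signSum (diff v) m) + -(e * n) := by
      push_cast
      ring
    rw [h₂]
    refine (abs_add_le _ _).trans ?_
    rw [abs_neg, abs_mul, abs_mul, Nat.abs_cast, add_mul]
    gcongr
  · obtain ⟨i, h₁, h₂⟩ := hv.exists_block m
    rw [blockStart_succ] at h₂
    have := length_le ψ (v i)
    exact ⟨i, h₁, by exact_mod_cast (by omega)⟩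
  · have h₁ := congrArg (Int.cast : ℤ → ℝ) (key n)
    have hκ' : |(κ : ℝ)| ≤ 4 := by exact_mod_cast hκ4
    push_cast at h₁ ⊢
    set x := (d : ℝ) * signSum (diff v) n - e * n
    set y := (d : ℝ) * signSum (diff v) (blockStart ψ v n) - e * blockStart ψ v n
    set z := (c₁ : ℝ) * signSum v n + c₂ * (sgn (v n) - sgn (v 0))
    have hy : y = κ / 4 * x + 1 / 4 * z := by linarith
    rw [hy]
    refine (abs_add_le _ _).trans (add_le_add_left ?_ _)
    rw [abs_mul, abs_div, abs_of_pos (show (0 : ℝ) < 4 by norm_num)]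
    exact mul_le_of_le_one_left (abs_nonneg _) (by linarith)

/-- Every prefix of `v` occurs in `v` with bounded gaps. -/
lemma exists_prefix_occurrence (h : PositivelyFixed ψ v) (n : ℕ) :
    ∃ G, ∀ m, ∃ i, m ≤ i ∧ i < m + G ∧ win v i n = win v 0 n := by
  set T := (ψ 0).length + (ψ 1).length with hT
  induction n with
  | zero => exact ⟨1, fun m => ⟨m, by simp⟩⟩
  | succ n ih =>
    rcases Nat.eq_zero_or_pos n with rfl | hn
    · refine ⟨2 * T, fun m => ?_⟩
      obtain ⟨k, hk₁, hk₂⟩ := h.exists_block m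
      obtain ⟨j, hj, hj'⟩ := List.mem_iff_getElem.1 (h.mem (v (k + 1)) (v 0))
      have hlk := length_le ψ (v k)
      have hlk' := length_le ψ (v (k + 1))
      have hs := blockStart_succ ψ v k
      refine ⟨blockStart ψ v (k + 1) + j, by omega, by omega, ?_⟩
      rw [zero_add, win_one, win_one, h.apply_blockStart_add _ _ hj,
        List.getD_eq_getElem _ _ hj, hj']
    · obtain ⟨G, hG⟩ := ih
      have himage : ∀ i, win v i n = win v 0 n → ∀ j ≤ n,
          blockStart ψ v (i + j) = blockStart ψ v i + blockStart ψ v j ∧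
          win v (blockStart ψ v i) (blockStart ψ v j) = win v 0 (blockStart ψ v j) := by
        intro i hi j
        induction j with
        | zero => simp [blockStart]
        | succ j ihj =>
          intro hj
          obtain ⟨e₁, e₂⟩ := ihj (by omega)
          have hij : v (i + j) = v j := by
            simpa using win_eq_win_iff.1 hi j (by omega)
          have e₃ : blockStart ψ v (i + (j + 1)) = blockStart ψ v i + blockStart ψ v (j + 1) := by
            rw [← add_assoc, blockStart_succ, blockStart_succ, e₁, hij, add_assoc]
          refine ⟨e₃, ?_⟩
          rw [blockStart_succ, win_add, win_add, e₂, zero_add, h.win_blockStart j, ← e₁, ← hij,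
            h.win_blockStart (i + j)]
      have hle : ∀ a b, blockStart ψ v (a + b) ≤ blockStart ψ v a + b * T := by
        intro a b
        induction b with
        | zero => simp
        | succ b ihb =>
          have := length_le ψ (v (a + b))
          rw [← add_assoc, blockStart_succ, add_mul]
          omega
      refine ⟨(G + 1) * T, fun m => ?_⟩
      obtain ⟨k, hk₁, hk₂⟩ := h.exists_block m
      obtain ⟨i, hi₁, hi₂, hi⟩ := hG (k + 1)
      obtain ⟨b, rfl⟩ := Nat.exists_eq_add_of_le hi₁
      have hb : b < G := by omega
      have hkm := h.blockStart_strictMono.monotone hi₁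
      have hup := hle k (1 + b)
      rw [← add_assoc] at hup
      have hmul : (1 + b) * T ≤ G * T := Nat.mul_le_mul_right _ (by omega)
      have hTpos : 0 < T := by have := h.two_le_length 0; omega
      refine ⟨blockStart ψ v (k + 1 + b), by omega, by rw [add_mul]; omega, ?_⟩
      have hw := win_eq_win_iff.1 (himage _ hi n le_rfl).2
      refine win_eq_win_iff.2 fun j hj => hw j ?_
      have := h.two_mul_le_blockStart n
      omega

end PositivelyFixed

/-- The number of occurrences of `w` in `s` at positions smaller than `N`. -/
def occCount (s : ℕ → ZMod 2) (w : Word) (N : ℕ) : ℕ :=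
  ∑ i ∈ range N, if win s i w.length = w then 1 else 0

lemma occCount_succ_eq (s : ℕ → ZMod 2) (a : ZMod 2) (y : Word) (N : ℕ) :
    occCount s y (N + 1) = occCount s (a :: y) N + occCount s ((a + 1) :: y) N
      + if win s 0 y.length = y then 1 else 0 := by
  rw [occCount, sum_range_succ', occCount, occCount, ← sum_add_distrib]
  congr 1
  refine sum_congr rfl fun i _ => ?_
  simp only [List.length_cons, win_succ', List.cons.injEq]
  rcases eq_or_eq_add_one (s i) a with h | h <;> simp [h]

/-- The word `w` has a frequency in `s` that is an integer multiple of `1 / q`. -/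
def HasFreqIn (s : ℕ → ZMod 2) (q : ℤ) (w : Word) : Prop :=
  ∃ k : ℤ, Sublinear fun N => (q : ℝ) * occCount s w N - k * N

/-- Both right extensions of `x` are factors of `s`. -/
def RightSpecial (s : ℕ → ZMod 2) (x : Word) : Prop := ∀ b, IsFactor s (x ++ [b])

lemma HasFreqIn.of_not_rightSpecial {s : ℕ → ZMod 2} {q : ℤ} {x : Word}
    (hx : HasFreqIn s q x) (hns : ¬ RightSpecial s x) (b : ZMod 2) :
    HasFreqIn s q (x ++ [b]) := by
  by_cases hb : IsFactor s (x ++ [b])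
  · obtain ⟨k, hk⟩ := hx
    refine ⟨k, ?_⟩
    convert hk using 4 with N
    refine congrArg _ (sum_congr rfl fun i _ => if_congr ?_ rfl rfl)
    rw [List.length_append, List.length_singleton, win_succ]
    refine ⟨fun h => (List.append_inj' h rfl).1, fun h => ?_⟩
    rw [h]
    by_contra hne
    refine hns fun c => ?_
    rcases eq_or_eq_of_ne (t := s (i + x.length)) (fun h => hne (by rw [h])) c with rfl | rfl
    · exact hb
    · exact isFactor_iff.2 ⟨i, by
        rw [List.length_append, List.length_singleton, win_succ, h]⟩
  · refine ⟨0, Sublinear.of_bounded (C := 0) fun N => ?_⟩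
    have : occCount s (x ++ [b]) N = 0 :=
      sum_eq_zero fun i _ => if_neg fun h => hb (isFactor_iff.2 ⟨i, h⟩)
    simp [this]

lemma HasFreqIn.cons_of_cons {s : ℕ → ZMod 2} {q : ℤ} {a : ZMod 2} {y : Word}
    (hy : HasFreqIn s q y) (ha : HasFreqIn s q ((a + 1) :: y)) : HasFreqIn s q (a :: y) := by
  obtain ⟨k, hk⟩ := hy
  obtain ⟨k', hk'⟩ := ha
  refine ⟨k - k', ?_⟩
  have hb : Sublinear fun N => (q : ℝ) *
      (((if win s N y.length = y then 1 else 0) - if win s 0 y.length = y then 1 else 0 : ℤ) : ℝ) :=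
    (Sublinear.of_bounded (C := 1) fun N => by split_ifs <;> simp).const_mul _
  convert (hk.add (hk'.const_mul (-1))).add hb using 2 with N
  have h := occCount_succ_eq s a y N
  have h' : occCount s y (N + 1) = occCount s y N + if win s N y.length = y then 1 else 0 :=
    sum_range_succ _ _
  have h'' := congrArg (Nat.cast : ℕ → ℝ) (h'.symm.trans h)
  push_cast at h'' ⊢
  linear_combination -(q : ℝ) * h''

lemma hasFreqIn_of_letters {s : ℕ → ZMod 2} {q : ℤ}
    (hspecial : ∀ x y : Word, x.length = y.length → RightSpecial s x → RightSpecial s y → x = y)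
    (hletter : ∀ a, HasFreqIn s q [a]) (n : ℕ) (w : Word) (hw : w.length = n + 1) :
    HasFreqIn s q w := by
  induction n generalizing w with
  | zero =>
    obtain ⟨a, rfl⟩ := List.length_eq_one_iff.1 hw
    exact hletter a
  | succ n ih =>
    obtain ⟨a, y, rfl⟩ := List.exists_cons_of_length_eq_add_one hw
    have hy : y.length = n + 1 := by simpa using hw
    obtain ⟨x, b, rfl⟩ : ∃ x b, y = x ++ [b] := by
      rcases List.eq_nil_or_concat y with rfl | ⟨x, b, rfl⟩
      · simp at hy
      · exact ⟨x, b, by simp⟩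
    have hx : x.length = n := by simpa using hy
    have hns : ∀ c, ¬ RightSpecial s (c :: x) → HasFreqIn s q (c :: (x ++ [b])) := fun c hc => by
      simpa using (ih (c :: x) (by simp [hx])).of_not_rightSpecial hc b
    by_cases ha : RightSpecial s (a :: x)
    · refine (ih _ hy).cons_of_cons (hns _ fun h => ?_)
      have := hspecial _ _ (by simp) ha h
      simp at this
    · exact hns a ha

lemma hasFreqIn_letters {s : ℕ → ZMod 2} {d e : ℤ}
    (h : Sublinear fun n => (d : ℝ) * signSum s n - e * n) (a : ZMod 2) :
    HasFreqIn s (2 * d) [a] := by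
  refine ⟨d + sgn a * e, ?_⟩
  convert h.const_mul (sgn a) using 2 with N
  have hcount : (2 * occCount s [a] N : ℤ) = N + sgn a * signSum s N := by
    induction N with
    | zero => simp [occCount, signSum]
    | succ N ih =>
      have h' : occCount s [a] (N + 1)
          = occCount s [a] N + if win s N [a].length = [a] then 1 else 0 := sum_range_succ _ _
      rw [h', signSum_succ]
      push_cast
      rw [mul_add, ih, List.length_singleton, win_one]
      rcases zmod_two_cases a with rfl | rfl <;> rcases zmod_two_cases (s N) with h | h <;>
        simp [h, sgn] <;> ring
  have := congrArg (Int.cast : ℤ → ℝ) hcount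
  push_cast at this ⊢
  linear_combination (d : ℝ) * this

lemma sum_occCount_le (s : ℕ → ZMod 2) {n : ℕ} {F : Finset Word} (hF : ∀ w ∈ F, w.length = n)
    (N : ℕ) : ∑ w ∈ F, occCount s w N ≤ N := by
  simp only [occCount]
  rw [sum_comm]
  calc ∑ i ∈ range N, ∑ w ∈ F, (if win s i w.length = w then 1 else 0)
      ≤ ∑ i ∈ range N, 1 := by
        refine sum_le_sum fun i _ => ?_
        rw [sum_congr rfl (g := fun w => if win s i n = w then 1 else 0)
          fun w hw => by rw [hF w hw], sum_ite_eq]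
        split_ifs <;> simp
    _ = N := by simp

lemma le_occCount {s : ℕ → ZMod 2} {w : Word} {G : ℕ}
    (hG : ∀ m, ∃ i, m ≤ i ∧ i < m + G ∧ win s i w.length = w) (m : ℕ) :
    m ≤ occCount s w (m * G) := by
  induction m with
  | zero => simp
  | succ m ih =>
    obtain ⟨i, h₁, h₂, h₃⟩ := hG (m * G)
    obtain ⟨j, rfl⟩ := Nat.exists_eq_add_of_le h₁
    rw [add_mul, one_mul, occCount, sum_range_add]
    refine add_le_add ih ?_
    have := single_le_sum
      (f := fun x => if win s (m * G + x) w.length = w then 1 else 0)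
      (fun x _ => Nat.zero_le _) (mem_range.2 (by omega : j < G))
    simpa [h₃] using this

/-- A sequence with bounded gaps all of whose length-`n` factors have frequencies in `ℤ / q`
has at most `q` factors of length `n`. -/
lemma card_le_of_hasFreqIn {s : ℕ → ZMod 2} {q : ℤ} (hq : 0 < q) {n : ℕ} {F : Finset Word}
    (hlen : ∀ w ∈ F, w.length = n) (hfreq : ∀ w ∈ F, HasFreqIn s q w)
    (hrec : ∀ w ∈ F, ∃ G, ∀ m, ∃ i, m ≤ i ∧ i < m + G ∧ win s i w.length = w) :
    (F.card : ℤ) ≤ q := by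
  have hqR : (0 : ℝ) < q := by exact_mod_cast hq
  have hk : ∀ w : Word, ∃ k : ℤ, w ∈ F →
      1 ≤ k ∧ Sublinear fun N => (q : ℝ) * occCount s w N - k * N := by
    intro w
    by_cases hw : w ∈ F
    · obtain ⟨k, hk⟩ := hfreq w hw
      refine ⟨k, fun _ => ⟨?_, hk⟩⟩
      obtain ⟨G, hG⟩ := hrec w hw
      by_contra! hk0
      have hk0' : (k : ℝ) ≤ 0 := by exact_mod_cast Int.lt_add_one_iff.1 hk0
      refine hk.not_forall_le hqR G fun m => le_trans ?_ (le_abs_self _)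
      have h₁ : (m : ℝ) ≤ occCount s w (m * G) := by exact_mod_cast le_occCount hG m
      have h₂ := mul_le_mul_of_nonneg_left h₁ hqR.le
      have h₃ := mul_nonneg (neg_nonneg.2 hk0') (Nat.cast_nonneg (α := ℝ) (m * G))
      linarith
    · exact ⟨0, fun h => absurd h hw⟩
  choose k hk using hk
  have hcard : (F.card : ℤ) ≤ ∑ w ∈ F, k w := by
    simpa using card_nsmul_le_sum F k 1 fun w hw => (hk w hw).1
  refine hcard.trans ?_
  by_contra! hlt
  have hlt' : (q : ℝ) + 1 ≤ ∑ w ∈ F, (k w : ℝ) := by exact_mod_cast hlt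
  have hsum := Sublinear.sum fun w hw => (hk w hw).2
  refine hsum.not_forall_le one_pos 1 fun m => le_trans ?_ (neg_le_abs _)
  rw [mul_one, sum_sub_distrib, ← mul_sum, ← sum_mul]
  have h₁ : (∑ w ∈ F, (occCount s w m : ℝ)) ≤ m := by exact_mod_cast sum_occCount_le s hlen m
  have h₂ := mul_le_mul_of_nonneg_left h₁ hqR.le
  have h₃ := mul_le_mul_of_nonneg_right hlt' (Nat.cast_nonneg (α := ℝ) m)
  linarith

/-- The factors of length `n`. -/
def factors (s : ℕ → ZMod 2) (n : ℕ) : Set Word := {w | w.length = n ∧ IsFactor s w}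

lemma finite_factors (s : ℕ → ZMod 2) (n : ℕ) : (factors s n).Finite :=
  (List.finite_length_eq (ZMod 2) n).subset fun _ h => h.1

lemma mem_factors {s : ℕ → ZMod 2} {n : ℕ} {w : Word} :
    w ∈ factors s n ↔ ∃ m, win s m n = w := by
  constructor
  · rintro ⟨rfl, h⟩
    exact isFactor_iff.1 h
  · rintro ⟨m, rfl⟩
    exact ⟨length_win s m n, isFactor_win s m n⟩

/-- If the complexity grows by one, there is at most one right special factor. -/
lemma eq_of_rightSpecial {s : ℕ → ZMod 2} {n : ℕ} (hc : Cplx s (n + 1) = Cplx s n + 1)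
    {x y : Word} (hx : x.length = n) (hy : y.length = n) (hxs : RightSpecial s x)
    (hys : RightSpecial s y) : x = y := by
  by_contra hne
  have hext : ∀ w : Word, ∃ b, w ∈ factors s n → w ++ [b] ∈ factors s (n + 1) := by
    intro w
    by_cases hw : w ∈ factors s n
    · obtain ⟨m, rfl⟩ := mem_factors.1 hw
      exact ⟨s (m + n), fun _ => mem_factors.2 ⟨m, win_succ s m n⟩⟩
    · exact ⟨0, fun h => absurd h hw⟩
  choose b hb using hext
  have hinj : Function.Injective fun w : Word => w ++ [b w] := fun w w' h =>
    (List.append_inj' h rfl).1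
  have hnot : ∀ w, w ++ [b w + 1] ∉ (fun w : Word => w ++ [b w]) '' factors s n := by
    rintro w ⟨w', -, h⟩
    obtain ⟨rfl, h'⟩ := List.append_inj' h rfl
    simp at h'
  have hsub : insert (x ++ [b x + 1]) (insert (y ++ [b y + 1])
      ((fun w : Word => w ++ [b w]) '' factors s n)) ⊆ factors s (n + 1) := by
    refine Set.insert_subset ⟨by simp [hx], hxs _⟩ (Set.insert_subset ⟨by simp [hy], hys _⟩ ?_)
    rintro _ ⟨w, hw, rfl⟩
    exact hb w hw
  have hfin := (finite_factors s n).image fun w : Word => w ++ [b w]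
  have hle := Set.ncard_le_ncard hsub (finite_factors s (n + 1))
  rw [Set.ncard_insert_of_notMem _ (hfin.insert _), Set.ncard_insert_of_notMem (hnot y) hfin,
    Set.ncard_image_of_injective _ hinj] at hle
  · change Cplx s n + 1 + 1 ≤ Cplx s (n + 1) at hle
    omega
  · rw [Set.mem_insert_iff, not_or]
    exact ⟨fun h => hne (List.append_inj' h rfl).1, hnot x⟩

lemma scanl_win_diff (v : ℕ → ZMod 2) (m n : ℕ) :
    (win (diff v) m n).scanl (· + ·) (v m) = win v m (n + 1) := by
  induction n generalizing m with
  | zero => simp [win_one]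
  | succ n ih =>
    rw [win_succ', List.scanl_cons, diff, CharTwo.add_cancel_left, ih, win_succ' v m (n + 1)]

lemma ex_scanl (a : ZMod 2) (w : Word) :
    Ex (w.scanl (· + ·) a) = w.scanl (· + ·) (a + 1) := by
  induction w generalizing a with
  | nil => simp [Ex]
  | cons b w ih =>
    have := ih (a + b)
    simp only [Ex, List.scanl_cons, List.map_cons] at this ⊢
    rw [this, add_right_comm]

lemma scanl_injective :
    Function.Injective fun p : ZMod 2 × Word => p.2.scanl (· + ·) p.1 := by
  rintro ⟨a, w⟩ ⟨a', w'⟩ h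
  simp only at h
  induction w generalizing a a' w' with
  | nil => cases w' <;> simp_all [List.scanl_cons]
  | cons b w ih =>
    cases w' with
    | nil => simp at h
    | cons b' w' =>
      rw [List.scanl_cons, List.scanl_cons, List.cons.injEq] at h
      have := ih _ _ _ h.2
      simp_all

lemma two_mul_cplx_diff {v : ℕ → ZMod 2} (hE : ∀ w : Word, IsFactor v w → IsFactor v (Ex w))
    (n : ℕ) : 2 * Cplx (diff v) n = Cplx v (n + 1) := by
  have himage : (fun p : ZMod 2 × Word => p.2.scanl (· + ·) p.1) ''
      (Set.univ ×ˢ factors (diff v) n) = factors v (n + 1) := by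
    ext w
    constructor
    · rintro ⟨⟨a, x⟩, ⟨-, hx⟩, rfl⟩
      obtain ⟨m, rfl⟩ := mem_factors.1 hx
      rcases eq_or_eq_add_one a (v m) with rfl | rfl
      · exact mem_factors.2 ⟨m, (scanl_win_diff v m n).symm⟩
      · simp only
        rw [← ex_scanl, scanl_win_diff]
        exact ⟨by simp [Ex], hE _ (isFactor_win v m _)⟩
    · intro hw
      obtain ⟨m, rfl⟩ := mem_factors.1 hw
      exact ⟨(v m, win (diff v) m n), ⟨trivial, mem_factors.2 ⟨m, rfl⟩⟩, scanl_win_diff v m n⟩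
  calc 2 * Cplx (diff v) n = (Set.univ ×ˢ factors (diff v) n : Set (ZMod 2 × Word)).ncard := by
        rw [Set.ncard_prod, Set.ncard_univ, Nat.card_zmod]
        rfl
    _ = Cplx v (n + 1) := by
        rw [← Set.ncard_image_of_injective _ scanl_injective, himage]
        rfl

lemma PositivelyFixed.exists_diff_occurrence {ψ : ZMod 2 → Word} {v : ℕ → ZMod 2}
    (h : PositivelyFixed ψ v) {w : Word} (hw : IsFactor (diff v) w) :
    ∃ G, ∀ m, ∃ i, m ≤ i ∧ i < m + G ∧ win (diff v) i w.length = w := by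
  obtain ⟨k, hk⟩ := isFactor_iff.1 hw
  obtain ⟨G, hG⟩ := h.exists_prefix_occurrence (k + w.length + 1)
  refine ⟨G + k, fun m => ?_⟩
  obtain ⟨i, h₁, h₂, h₃⟩ := hG m
  refine ⟨i + k, by omega, by omega, ?_⟩
  rw [← hk, length_win]
  refine win_eq_win_iff.2 fun j hj => ?_
  have e := win_eq_win_iff.1 h₃
  have e₁ := e (k + j) (by omega)
  have e₂ := e (k + j + 1) (by omega)
  simp only [zero_add, ← add_assoc] at e₁ e₂
  rw [diff, diff, e₁, e₂]

end RoteFixed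

open RoteFixed

/-- a complementary symmetric Rote sequence is not a fixed point of any
primitive morphism over `{0,1}`. -/
theorem rote_not_fixed_point (v : ℕ → ZMod 2) (hrote : IsCSRote v) :
    ∀ ψ : ZMod 2 → Word, PrimitiveMorphism ψ → ¬ SubstImage ψ v v := by
  intro ψ hψ hfix
  obtain ⟨hcplx, hE⟩ := hrote
  obtain ⟨φ, hφ⟩ := exists_positivelyFixed hψ hfix
  obtain ⟨d, e, hd, hsub⟩ := hφ.exists_sublinear_signSum_diff hE
  have hsturm : ∀ n, Cplx (diff v) n = n + 1 := fun n => by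
    have h₁ := two_mul_cplx_diff hE n
    have h₂ := hcplx (n + 1) (by omega)
    omega
  have hspecial : ∀ x y : Word, x.length = y.length → RightSpecial (diff v) x →
      RightSpecial (diff v) y → x = y := fun x y hxy hx hy =>
    eq_of_rightSpecial (by rw [hsturm, hsturm]) hxy rfl hx hy
  obtain ⟨n, hn⟩ := Int.eq_ofNat_of_zero_le (show 0 ≤ 2 * d by omega)
  have hcard := card_le_of_hasFreqIn (s := diff v) (q := 2 * d) (n := n) (by omega)
    (F := (finite_factors (diff v) n).toFinset)
    (fun w hw => ((Set.Finite.mem_toFinset _).1 hw).1)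
    (fun w hw => hasFreqIn_of_letters hspecial (hasFreqIn_letters hsub) (n - 1) w (by
      rw [((Set.Finite.mem_toFinset _).1 hw).1]
      omega))
    (fun w hw => hφ.exists_diff_occurrence ((Set.Finite.mem_toFinset _).1 hw).2)
  rw [← Set.ncard_eq_toFinset_card _ (finite_factors (diff v) n)] at hcard
  change (Cplx (diff v) n : ℤ) ≤ 2 * d at hcard
  rw [hsturm] at hcard
  omega
end

section
/- Let v be a complementary symmetric Rote sequence associated with a standard Sturmian sequence u = S(v), let x be a non-empty prefix of v and w = S(x), with return words r (more frequent) and s to w in u. If r is stable (even number of 1's) and s is unstable, and u decomposes into blocks r^k s and r^{k+1} s, then the three return words A, B, C of x in v satisfy S(A0) = r, S(B0) = s r^{k+1} s and S(C0) = s r^k s. -/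
/-- The difference map `S`. -/
def Sdiff (v : Word) : Word := List.zipWith (· + ·) v v.tail

/-- A Sturmian sequence: factor complexity `n + 1` for all `n`. -/
def IsSturmian (s : ℕ → ZMod 2) : Prop := ∀ n, Cplx s n = n + 1

/-- Prepend a letter to an infinite sequence. -/
def consL (a : ZMod 2) (s : ℕ → ZMod 2) : ℕ → ZMod 2 :=
  fun n => match n with
  | 0 => a
  | k + 1 => s k

/-- A standard Sturmian sequence: both `0u` and `1u` are Sturmian. -/
def IsStandardSturmian (s : ℕ → ZMod 2) : Prop :=
  IsSturmian (consL 0 s) ∧ IsSturmian (consL 1 s)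

/-- The sequence `s` is a concatenation of blocks from `{A, B}`. -/
def ConcatOfBlocks (s : ℕ → ZMod 2) (A B : Word) : Prop :=
  ∃ d : ℕ → Word, (∀ m, d m = A ∨ d m = B) ∧
    ∀ n, ∃ K, (List.ofFn fun i : Fin n => s i) <+:
                (List.ofFn fun i : Fin K => d i).flatten

section Occurrences

theorem occAt_iff {f : ℕ → ZMod 2} {w : Word} {m : ℕ} :
    OccAt f w m ↔ ∀ t (h : t < w.length), w[t] = f (m + t) := by
  unfold OccAt
  constructor
  · intro h t ht
    have h' := congrArg (fun l : Word => l[t]?) h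
    simpa [ht] using h'
  · intro h
    apply List.ext_getElem
    · simp
    · intro t h1 h2
      simpa using h t h1

theorem occAt_nil (f : ℕ → ZMod 2) (m : ℕ) : OccAt f [] m := by
  simp [occAt_iff]

theorem occAt_cons {f : ℕ → ZMod 2} {a : ZMod 2} {w : Word} {m : ℕ} :
    OccAt f (a :: w) m ↔ a = f m ∧ OccAt f w (m + 1) := by
  simp only [occAt_iff]
  constructor
  · intro h
    refine ⟨h 0 (by simp), fun t ht => ?_⟩
    have := h (t + 1) (by simpa using ht)
    simpa [add_assoc, add_comm 1 t] using this
  · rintro ⟨h0, h⟩ t ht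
    cases t with
    | zero => simpa using h0
    | succ t =>
      have := h t (by simpa using ht)
      simpa [add_assoc, add_comm 1 t] using this

theorem occAt_append {f : ℕ → ZMod 2} {a b : Word} {m : ℕ} :
    OccAt f (a ++ b) m ↔ OccAt f a m ∧ OccAt f b (m + a.length) := by
  induction a generalizing m with
  | nil => simp [occAt_nil]
  | cons x a ih =>
    simp only [List.cons_append, occAt_cons, ih, List.length_cons, and_assoc]
    rw [show m + 1 + a.length = m + (a.length + 1) by omega]

theorem occAt_ofFn {f : ℕ → ZMod 2} {g : ℕ → ZMod 2} {L m : ℕ} :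
    OccAt f (List.ofFn fun t : Fin L => g t) m ↔ ∀ t < L, g t = f (m + t) := by
  simp [occAt_iff]

theorem occAt_replicate_flatten {f : ℕ → ZMod 2} {r : Word} {e m : ℕ} :
    OccAt f (List.replicate e r).flatten m ↔ ∀ t < e, OccAt f r (m + t * r.length) := by
  induction e generalizing m with
  | zero => simp [occAt_nil]
  | succ e ih =>
    simp only [List.replicate_succ, List.flatten_cons, occAt_append, ih]
    constructor
    · rintro ⟨h0, h⟩ t ht
      cases t with
      | zero => simpa using h0
      | succ t =>
        have := h t (by omega)
        rwa [show m + (t + 1) * r.length = m + r.length + t * r.length by ring]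
    · intro h
      refine ⟨by simpa using h 0 (by omega), fun t ht => ?_⟩
      have := h (t + 1) (by omega)
      rwa [show m + (t + 1) * r.length = m + r.length + t * r.length by ring] at this

/-- The letter of a primitive `v` of `u` after reading a factor `z` of `u`. -/
theorem primitive_add_length {u v : ℕ → ZMod 2} (hu : ∀ i, u i = v i + v (i + 1))
    {z : Word} {i : ℕ} (h : OccAt u z i) :
    v (i + z.length) = v i + (z.count 1 : ℕ) := by
  induction z generalizing i with
  | nil => simp
  | cons a z ih =>
    obtain ⟨ha, hz⟩ := occAt_cons.1 h
    have h1 := ih hz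
    rw [hu] at ha
    have h2 : v (i + 1) = v i + a := by
      rw [ha, ← add_assoc, CharTwo.add_self_eq_zero, zero_add]
    rw [List.length_cons, show i + (z.length + 1) = i + 1 + z.length by omega, h1, h2,
      List.count_cons]
    have h3 : ∀ c : ZMod 2, c = 0 ∨ c = 1 := by decide
    rcases h3 a with rfl | rfl
    · simp
    · simp
      ring

end Occurrences

section DifferenceMap

theorem length_Sdiff (l : Word) : (Sdiff l).length = l.length - 1 := by
  simp [Sdiff]

theorem Sdiff_append_zero_injective :
    Function.Injective fun l : Word => Sdiff (l ++ [0]) := by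
  intro l
  induction l with
  | nil =>
    intro l' h
    have := congrArg List.length h
    simp [length_Sdiff] at this
    exact (List.length_eq_zero_iff.1 this.symm).symm
  | cons a l ih =>
    intro l' h
    cases l' with
    | nil =>
      have := congrArg List.length h
      simp [length_Sdiff] at this
    | cons b l' =>
      have key : ∀ (c : ZMod 2) (q : Word), Sdiff (c :: q ++ [0]) =
          (c + (q ++ [0]).head (by simp)) :: Sdiff (q ++ [0]) := by
        intro c q
        cases q <;> simp [Sdiff]
      simp only [key, List.cons.injEq] at h
      have hl : l = l' := ih h.2
      subst hl
      simpa using h.1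

theorem Sdiff_ofFn {u v : ℕ → ZMod 2} (hu : ∀ i, u i = v i + v (i + 1)) (i L : ℕ) :
    Sdiff (List.ofFn fun t : Fin (L + 1) => v (i + t)) = List.ofFn fun t : Fin L => u (i + t) := by
  apply List.ext_getElem
  · simp [length_Sdiff]
  · intro t h1 h2
    simp [Sdiff, hu, add_assoc, -List.ofFn_succ]

/-- A factor of `v` followed by the letter `0` is mapped by `S` to the factor of `u`. -/
theorem Sdiff_ofFn_append_zero {u v : ℕ → ZMod 2} (hu : ∀ i, u i = v i + v (i + 1))
    {z : Word} {i : ℕ} (hz : OccAt u z i) (h0 : v (i + z.length) = 0) :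
    Sdiff ((List.ofFn fun t : Fin z.length => v (i + t)) ++ [0]) = z := by
  have h1 : (List.ofFn fun t : Fin z.length => v (i + t)) ++ [0] =
      List.ofFn fun t : Fin (z.length + 1) => v (i + t) := by
    rw [List.ofFn_succ_last]
    simp [h0]
  rw [h1, Sdiff_ofFn hu]
  exact hz.symm

/-- Two places where `u` agrees are places where its primitive agrees up to the first letter. -/
theorem primitive_agree {u v : ℕ → ZMod 2} (hu : ∀ i, u i = v i + v (i + 1)) {m p L : ℕ}
    (hv : v m = v p) (h : ∀ t < L, u (m + t) = u (p + t)) : ∀ t ≤ L, v (m + t) = v (p + t) := by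
  intro t
  induction t with
  | zero => simpa using hv
  | succ t ih =>
    intro ht
    have h1 := h t (by omega)
    rw [hu, hu, ih (by omega)] at h1
    exact add_left_cancel h1

theorem occAt_primitive_prefix_iff {u v : ℕ → ZMod 2} (hu : ∀ i, u i = v i + v (i + 1))
    (hv0 : v 0 = 0) (n m : ℕ) :
    OccAt v (List.ofFn fun i : Fin (n + 1) => v i) m ↔
      OccAt u (List.ofFn fun i : Fin n => u i) m ∧ v m = 0 := by
  rw [occAt_ofFn, occAt_ofFn]
  constructor
  · intro h
    refine ⟨fun t ht => ?_, ?_⟩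
    · rw [hu, hu, h t (by omega), h (t + 1) (by omega)]
      rfl
    · rw [← hv0, h 0 (by omega), add_zero]
  · rintro ⟨h, h0⟩ t ht
    have := primitive_agree hu (m := 0) (p := m) (L := n) (by rw [hv0, h0])
      (by simpa using h) t (by omega)
    simpa using this

end DifferenceMap

section Complexity

theorem Cplx_le_of_eventually_periodic {f : ℕ → ZMod 2} {N p : ℕ} (hp : 0 < p)
    (h : ∀ i, N ≤ i → f (i + p) = f i) (L : ℕ) : Cplx f L ≤ N + p := by
  have hred : ∀ m, ∃ m' < N + p, ∀ t, f (m + t) = f (m' + t) := by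
    intro m
    induction m using Nat.strong_induction_on with
    | _ m ih =>
      by_cases hm : m < N + p
      · exact ⟨m, hm, fun _ => rfl⟩
      · obtain ⟨m', h1, h2⟩ := ih (m - p) (by omega)
        refine ⟨m', h1, fun t => ?_⟩
        rw [← h2, ← h (m - p + t) (by omega)]
        congr 1
        omega
  have hsub : {w : Word | w.length = L ∧ IsFactor f w} ⊆
      ((Finset.range (N + p)).image fun m => List.ofFn fun t : Fin L => f (m + t) : Finset Word) := by
    rintro w ⟨rfl, m, hm⟩
    obtain ⟨m', h1, h2⟩ := hred m
    simp only [Finset.coe_image, Finset.coe_range, Set.mem_image, Set.mem_Iio]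
    refine ⟨m', h1, ?_⟩
    conv_rhs => rw [hm]
    simp [h2]
  calc Cplx f L ≤ _ := Set.ncard_le_ncard hsub (Finset.finite_toSet _)
    _ ≤ N + p := by
      rw [Set.ncard_coe_finset]
      exact Finset.card_image_le.trans (by simp)

theorem not_eventually_periodic_of_standard {u : ℕ → ZMod 2} (hstd : IsStandardSturmian u)
    {N p : ℕ} (hp : 0 < p) : ¬ ∀ i, N ≤ i → u (i + p) = u i := by
  intro h
  have h1 : ∀ i, N + 1 ≤ i → consL 0 u (i + p) = consL 0 u i := by
    intro i hi
    obtain ⟨i, rfl⟩ : ∃ i', i = i' + 1 := ⟨i - 1, by omega⟩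
    rw [show i + 1 + p = i + p + 1 by omega]
    exact h i (by omega)
  have h2 := Cplx_le_of_eventually_periodic hp h1 (N + 1 + p)
  rw [hstd.1] at h2
  omega

end Complexity

section Blocks

theorem ConcatOfBlocks.exists_positions {u : ℕ → ZMod 2} {A B : Word} (h : ConcatOfBlocks u A B)
    (hA : A ≠ []) (hB : B ≠ []) :
    ∃ (d : ℕ → Word) (Q : ℕ → ℕ), (∀ b, d b = A ∨ d b = B) ∧ Q 0 = 0 ∧
      ∀ b, Q (b + 1) = Q b + (d b).length ∧ OccAt u (d b) (Q b) := by
  obtain ⟨d, hd, hpre⟩ := h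
  set D : ℕ → Word := fun K => (List.ofFn fun i : Fin K => d i).flatten with hD
  have hsucc : ∀ K, D (K + 1) = D K ++ d K := by
    intro K
    simp only [hD]
    rw [List.ofFn_succ_last]
    simp
  have hne : ∀ b, 0 < (d b).length := by
    intro b
    rcases hd b with h | h <;> rw [h] <;> exact List.length_pos_of_ne_nil ‹_›
  have hlen : ∀ K, (D (K + 1)).length = (D K).length + (d K).length := by
    intro K
    rw [hsucc, List.length_append]
  have hmono : StrictMono fun K => (D K).length :=
    strictMono_nat_of_lt_succ fun K => by
      have := hlen K
      have := hne K
      omega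
  have hprefix : ∀ {b K}, b ≤ K → D b <+: D K := by
    intro b K hbK
    induction K, hbK using Nat.le_induction with
    | base => exact List.prefix_rfl
    | succ K _ ih => exact ih.trans (hsucc K ▸ List.prefix_append _ _)
  refine ⟨d, fun K => (D K).length, hd, by simp [hD], fun b => ⟨hlen b, ?_⟩⟩
  obtain ⟨K, hK⟩ := hpre (D (b + 1)).length
  have hbK : b + 1 ≤ K := by
    have := hK.length_le
    rw [List.length_ofFn] at this
    exact hmono.le_iff_le.1 this
  have heq := (List.prefix_of_prefix_length_le hK (hprefix hbK) (by simp)).eq_of_length (by simp)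
  have hocc : OccAt u (D (b + 1)) 0 := by
    unfold OccAt
    simpa using heq.symm
  rw [hsucc, occAt_append, zero_add] at hocc
  exact hocc.2

/-- In a sequence cut into return words to `w`, every cutting point is an occurrence of `w`. -/
theorem occAt_of_cut {u : ℕ → ZMod 2} {w : Word} {G : ℕ → Prop}
    (hG : ∀ p, G p → ∃ z ∈ ReturnWords u w, OccAt u z p ∧ G (p + z.length)) {p : ℕ} (hp : G p) :
    OccAt u w p := by
  rw [occAt_iff]
  intro t
  induction t using Nat.strong_induction_on generalizing p with
  | _ t ih =>
    intro ht
    obtain ⟨z, ⟨i, j, hi, hj, hij, -, hz⟩, hzp, hG'⟩ := hG p hp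
    have hzl : z.length = j - i := by rw [hz, List.length_ofFn]
    rw [hz, occAt_ofFn (g := fun t => u (i + t))] at hzp
    by_cases htz : t < j - i
    · rw [occAt_iff.1 hi t ht, hzp t htz]
    · have h1 := ih (t - (j - i)) (by omega) hG' (by omega)
      rw [occAt_iff.1 hj _ (by omega)] at h1
      rw [occAt_iff.1 hi t ht]
      convert h1 using 2 <;> omega

/-- A return word to `w` read between two occurrences of `w` contains no other occurrence. -/
theorem not_occAt_between {u : ℕ → ZMod 2} {w z : Word} {p : ℕ} (hz : z ∈ ReturnWords u w)
    (hzp : OccAt u z p) (hp : OccAt u w (p + z.length)) {m : ℕ} (h1 : p < m)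
    (h2 : m < p + z.length) : ¬ OccAt u w m := by
  obtain ⟨i, j, -, hj, hij, hno, hz⟩ := hz
  have hzl : z.length = j - i := by rw [hz, List.length_ofFn]
  rw [hzl] at h2 hp
  rw [hz, occAt_ofFn (g := fun t => u (i + t))] at hzp
  intro hm
  apply hno (i + (m - p)) (by omega) (by omega)
  rw [occAt_iff] at hm hp hj ⊢
  intro t ht
  rw [hm t ht]
  by_cases htz : m - p + t < j - i
  · have := hzp _ htz
    rw [show m + t = p + (m - p + t) by omega, ← this]
    congr 1
    omega
  · have e1 := hp (m - p + t - (j - i)) (by omega)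
    have e2 := hj (m - p + t - (j - i)) (by omega)
    rw [e1] at e2
    convert e2 using 2 <;> omega

/-- The sequence `u` is cut into blocks `r ^ (e b) s` starting at the positions `Q b`. -/
structure BlockCut (u : ℕ → ZMod 2) (r s : Word) (e Q : ℕ → ℕ) : Prop where
  zero : Q 0 = 0
  succ : ∀ b, Q (b + 1) = Q b + e b * r.length + s.length
  occ_r : ∀ b t, t < e b → OccAt u r (Q b + t * r.length)
  occ_s : ∀ b, OccAt u s (Q b + e b * r.length)

theorem ConcatOfBlocks.exists_blockCut {u : ℕ → ZMod 2} {r s : Word} {k : ℕ} (hs : s ≠ [])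
    (h : ConcatOfBlocks u ((List.replicate k r).flatten ++ s)
      ((List.replicate (k + 1) r).flatten ++ s)) :
    ∃ e Q : ℕ → ℕ, (∀ b, e b = k ∨ e b = k + 1) ∧ BlockCut u r s e Q := by
  obtain ⟨d, Q, hd, hQ0, hQ⟩ := h.exists_positions (by simp [hs]) (by simp [hs])
  have he : ∀ b, ∃ m, (m = k ∨ m = k + 1) ∧ d b = (List.replicate m r).flatten ++ s := by
    intro b
    rcases hd b with h | h
    · exact ⟨k, .inl rfl, h⟩
    · exact ⟨k + 1, .inr rfl, h⟩
  choose e he1 he2 using he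
  have hocc := fun b => (hQ b).2
  simp only [he2, occAt_append, occAt_replicate_flatten, List.length_flatten,
    List.map_replicate, List.sum_replicate, smul_eq_mul] at hocc
  refine ⟨e, Q, he1, hQ0, fun b => ?_, fun b t ht => (hocc b).1 t ht, fun b => (hocc b).2⟩
  rw [(hQ b).1, he2]
  simp [add_assoc]

namespace BlockCut

variable {u : ℕ → ZMod 2} {r s w : Word} {e Q : ℕ → ℕ}

theorem succ_le_of_lt (h : BlockCut u r s e Q) {b c : ℕ} (hbc : b < c) :
    Q b + e b * r.length + s.length ≤ Q c := by
  induction c, hbc using Nat.le_induction with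
  | base => exact (h.succ b).ge
  | succ c _ ih =>
    have := h.succ c
    omega

theorem pos_of_mem_returnWords {f : ℕ → ZMod 2} {z : Word} (hz : z ∈ ReturnWords f w) :
    0 < z.length := by
  obtain ⟨i, j, -, -, hij, -, rfl⟩ := hz
  simpa using hij

theorem occAt_cut (h : BlockCut u r s e Q) (hr : r ∈ ReturnWords u w) (hs : s ∈ ReturnWords u w)
    {b t : ℕ} (ht : t ≤ e b) : OccAt u w (Q b + t * r.length) := by
  apply occAt_of_cut (G := fun p => ∃ b t, t ≤ e b ∧ p = Q b + t * r.length) _ ⟨b, t, ht, rfl⟩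
  rintro p ⟨b, t, ht, rfl⟩
  rcases ht.lt_or_eq with ht | rfl
  · exact ⟨r, hr, h.occ_r b t ht, b, t + 1, ht, by ring⟩
  · exact ⟨s, hs, h.occ_s b, b + 1, 0, Nat.zero_le _, by rw [h.succ]; ring⟩

theorem exists_cell (h : BlockCut u r s e Q) (hr : 0 < r.length) (hs : 0 < s.length) (m : ℕ) :
    ∃ b t, t ≤ e b ∧ Q b + t * r.length ≤ m ∧
      (t < e b ∧ m < Q b + t * r.length + r.length ∨
        t = e b ∧ m < Q b + t * r.length + s.length) := by
  induction m with
  | zero =>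
    refine ⟨0, 0, Nat.zero_le _, by simp [h.zero], ?_⟩
    rcases Nat.eq_zero_or_pos (e 0) with h0 | h0
    · right
      omega
    · left
      omega
  | succ m ih =>
    obtain ⟨b, t, ht, h1, ⟨h2, h3⟩ | ⟨h2, h3⟩⟩ := ih
    · by_cases hm : m + 1 < Q b + t * r.length + r.length
      · exact ⟨b, t, ht, by omega, .inl ⟨h2, hm⟩⟩
      · have h4 : (t + 1) * r.length = t * r.length + r.length := by ring
        refine ⟨b, t + 1, h2, by omega, ?_⟩
        omega
    · by_cases hm : m + 1 < Q b + t * r.length + s.length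
      · exact ⟨b, t, ht, by omega, .inr ⟨h2, hm⟩⟩
      · have h4 := h.succ b
        subst h2
        refine ⟨b + 1, 0, Nat.zero_le _, by omega, ?_⟩
        omega

theorem occAt_iff_cut (h : BlockCut u r s e Q) (hr : r ∈ ReturnWords u w)
    (hs : s ∈ ReturnWords u w) {m : ℕ} :
    OccAt u w m ↔ ∃ b t, t ≤ e b ∧ m = Q b + t * r.length := by
  constructor
  · intro hm
    obtain ⟨b, t, ht, h1, h2⟩ :=
      h.exists_cell (pos_of_mem_returnWords hr) (pos_of_mem_returnWords hs) m
    refine ⟨b, t, ht, ?_⟩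
    by_contra hne
    rcases h2 with ⟨h2, h3⟩ | ⟨rfl, h3⟩
    · refine not_occAt_between hr (h.occ_r b t h2) ?_ (by omega) h3 hm
      convert h.occAt_cut hr hs (b := b) (t := t + 1) h2 using 1
      ring
    · refine not_occAt_between hs (h.occ_s b) ?_ (by omega) h3 hm
      convert h.occAt_cut hr hs (b := b + 1) (t := 0) (Nat.zero_le _) using 1
      rw [h.succ]
      ring
  · rintro ⟨b, t, ht, rfl⟩
    exact h.occAt_cut hr hs ht

/-- The return word `s r ^ (e (b + 1)) s` is read from the last cut of the block `b`. -/
theorem occAt_s_r_s (h : BlockCut u r s e Q) (b : ℕ) :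
    OccAt u (s ++ (List.replicate (e (b + 1)) r).flatten ++ s) (Q b + e b * r.length) := by
  rw [occAt_append, occAt_append, occAt_replicate_flatten, ← h.succ]
  refine ⟨⟨h.occ_s b, h.occ_r (b + 1)⟩, ?_⟩
  convert h.occ_s (b + 1) using 1
  simp [h.succ]
  ring

theorem length_s_r_s (r s : Word) (m : ℕ) :
    (s ++ (List.replicate m r).flatten ++ s).length = s.length + m * r.length + s.length := by
  simp [add_assoc]

theorem primitive_cut (h : BlockCut u r s e Q) {v : ℕ → ZMod 2} (hv0 : v 0 = 0)
    (hu : ∀ i, u i = v i + v (i + 1)) (hr : Even (r.count 1)) (hs : ¬ Even (s.count 1))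
    {b t : ℕ} (ht : t ≤ e b) : v (Q b + t * r.length) = b := by
  have hstep : ∀ b t, t ≤ e b → v (Q b + t * r.length) = v (Q b) := by
    intro b t
    induction t with
    | zero => simp
    | succ t ih =>
      intro ht
      have h1 := primitive_add_length hu (h.occ_r b t ht)
      rw [ih (by omega), (ZMod.natCast_eq_zero_iff_even).2 hr, add_zero] at h1
      rw [← h1]
      congr 1
      ring
  rw [hstep b t ht]
  clear ht
  induction b with
  | zero => simp [h.zero, hv0]
  | succ b ih =>
    rw [h.succ, primitive_add_length hu (h.occ_s b), hstep b _ le_rfl, ih,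
      (ZMod.natCast_eq_one_iff_odd).2 (Nat.not_even_iff_odd.1 hs)]
    simp

end BlockCut

/-- `i` and `j` are consecutive elements of the set `O` of natural numbers. -/
def Consecutive (O : ℕ → Prop) (i j : ℕ) : Prop :=
  O i ∧ O j ∧ i < j ∧ ∀ t, i < t → t < j → ¬ O t

theorem Consecutive.right_unique {O : ℕ → Prop} {i j j' : ℕ} (h : Consecutive O i j)
    (h' : Consecutive O i j') : j = j' := by
  obtain ⟨-, hj, hij, hno⟩ := h
  obtain ⟨-, hj', hij', hno'⟩ := h'
  rcases lt_trichotomy j j' with hlt | heq | hlt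
  · exact absurd hj (hno' j hij hlt)
  · exact heq
  · exact absurd hj' (hno j' hij' hlt)

namespace BlockCut

variable {u v : ℕ → ZMod 2} {r s w : Word} {e Q : ℕ → ℕ}

theorem consecutive_r (h : BlockCut u r s e Q) (hv0 : v 0 = 0) (hu : ∀ i, u i = v i + v (i + 1))
    (hr : Even (r.count 1)) (hs : ¬ Even (s.count 1)) (hrw : r ∈ ReturnWords u w)
    (hsw : s ∈ ReturnWords u w) {b t : ℕ} (ht : t < e b) :
    Consecutive (fun m => OccAt u w m ∧ v m = b) (Q b + t * r.length)
      (Q b + t * r.length + r.length) := by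
  have heq : Q b + t * r.length + r.length = Q b + (t + 1) * r.length := by ring
  have hocc : OccAt u w (Q b + t * r.length + r.length) := heq ▸ h.occAt_cut hrw hsw ht
  refine ⟨⟨h.occAt_cut hrw hsw ht.le, h.primitive_cut hv0 hu hr hs ht.le⟩,
    ⟨hocc, heq ▸ h.primitive_cut hv0 hu hr hs ht⟩, ?_, fun m h1 h2 h3 => ?_⟩
  · have := pos_of_mem_returnWords hrw
    omega
  · exact not_occAt_between hrw (h.occ_r b t ht) hocc h1 h2 h3.1

theorem consecutive_s (h : BlockCut u r s e Q) (hv0 : v 0 = 0) (hu : ∀ i, u i = v i + v (i + 1))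
    (hr : Even (r.count 1)) (hs : ¬ Even (s.count 1)) (hrw : r ∈ ReturnWords u w)
    (hsw : s ∈ ReturnWords u w) (b : ℕ) :
    Consecutive (fun m => OccAt u w m ∧ v m = b) (Q b + e b * r.length)
      (Q b + e b * r.length + (s.length + e (b + 1) * r.length + s.length)) := by
  have heq : Q b + e b * r.length + (s.length + e (b + 1) * r.length + s.length) =
      Q (b + 2) + 0 * r.length := by
    rw [h.succ (b + 1), h.succ b]
    ring
  rw [heq]
  refine ⟨⟨h.occAt_cut hrw hsw le_rfl, h.primitive_cut hv0 hu hr hs le_rfl⟩,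
    ⟨h.occAt_cut hrw hsw (Nat.zero_le _), ?_⟩, ?_, fun m h1 h2 h3 => ?_⟩
  · rw [h.primitive_cut hv0 hu hr hs (Nat.zero_le _)]
    push_cast
    rw [show (2 : ZMod 2) = 0 from rfl, add_zero]
  · have := pos_of_mem_returnWords hsw
    omega
  · obtain ⟨c, t, ht, rfl⟩ := (h.occAt_iff_cut hrw hsw).1 h3.1
    have hc := h3.2
    rw [h.primitive_cut hv0 hu hr hs ht, ZMod.natCast_eq_natCast_iff'] at hc
    have hle : t * r.length ≤ e c * r.length := Nat.mul_le_mul_right _ ht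
    rcases lt_trichotomy c b with hlt | rfl | hlt
    · have := h.succ_le_of_lt hlt
      omega
    · omega
    · rcases Nat.eq_or_lt_of_le (show b + 1 ≤ c from hlt) with rfl | hlt'
      · omega
      · rcases Nat.eq_or_lt_of_le (show b + 2 ≤ c from hlt') with rfl | hlt''
        · omega
        · have := h.succ_le_of_lt hlt''
          omega

/-- Classification of the gaps between occurrences of `w` at which `v` vanishes. -/
theorem consecutive_cases (h : BlockCut u r s e Q) (hv0 : v 0 = 0)
    (hu : ∀ i, u i = v i + v (i + 1)) (hr : Even (r.count 1)) (hs : ¬ Even (s.count 1))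
    (hrw : r ∈ ReturnWords u w) (hsw : s ∈ ReturnWords u w) {i j : ℕ}
    (hij : Consecutive (fun m => OccAt u w m ∧ v m = 0) i j) :
    (OccAt u r i ∧ j = i + r.length) ∨
      ∃ b, Even b ∧ OccAt u (s ++ (List.replicate (e (b + 1)) r).flatten ++ s) i ∧
        j = i + (s.length + e (b + 1) * r.length + s.length) := by
  obtain ⟨b, t, ht, rfl⟩ := (h.occAt_iff_cut hrw hsw).1 hij.1.1
  have hb : (b : ZMod 2) = 0 := (h.primitive_cut hv0 hu hr hs ht).symm.trans hij.1.2
  rcases ht.lt_or_eq with ht | rfl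
  · left
    have h1 := h.consecutive_r hv0 hu hr hs hrw hsw ht
    rw [hb] at h1
    exact ⟨h.occ_r b t ht, hij.right_unique h1⟩
  · right
    have h1 := h.consecutive_s hv0 hu hr hs hrw hsw b
    rw [hb] at h1
    exact ⟨b, ZMod.natCast_eq_zero_iff_even.1 hb, h.occAt_s_r_s b, hij.right_unique h1⟩

/-- By complementary symmetry, every exponent of a block other than the first one occurs at an
odd index. -/
theorem exists_even_succ_exponent (h : BlockCut u r s e Q) (hv0 : v 0 = 0)
    (hrote : IsCSRote v) (hu : ∀ i, u i = v i + v (i + 1)) (hr : Even (r.count 1))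
    (hs : ¬ Even (s.count 1)) (hrw : r ∈ ReturnWords u w) (hsw : s ∈ ReturnWords u w)
    (he : ∀ b, 1 ≤ e b) (b : ℕ) : ∃ c, Even c ∧ e (c + 1) = e (b + 1) := by
  rcases Nat.even_or_odd b with hb | hb
  · exact ⟨b, hb, rfl⟩
  have hrpos := pos_of_mem_returnWords hrw
  have hspos := pos_of_mem_returnWords hsw
  have hcons := h.consecutive_s hv0 hu hr hs hrw hsw b
  rw [(ZMod.natCast_eq_one_iff_odd).2 hb] at hcons
  set p := Q b + e b * r.length
  set l := s.length + e (b + 1) * r.length + s.length with hl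
  obtain ⟨m, hm⟩ := hrote.2 (List.ofFn fun t : Fin (l + w.length + 1) => v (p + t))
    ⟨p, occAt_ofFn (g := fun t => v (p + t)) |>.2 fun _ _ => rfl⟩
  have hvm : ∀ t ≤ l + w.length, v (m + t) = v (p + t) + 1 := by
    intro t ht
    have := occAt_iff.1 hm t (by simpa [Ex] using Nat.lt_succ_of_le ht)
    simpa [Ex, -List.ofFn_succ] using this.symm
  have hum : ∀ t < l + w.length, u (m + t) = u (p + t) := by
    intro t ht
    rw [hu, hu, hvm t ht.le, add_assoc m, hvm (t + 1) ht, ← add_assoc p]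
    linear_combination CharTwo.two_eq_zero (R := ZMod 2)
  have hocc : ∀ o ≤ l, (OccAt u w (m + o) ∧ v (m + o) = 0) ↔
      (OccAt u w (p + o) ∧ v (p + o) = 1) := by
    intro o ho
    have h1 : OccAt u w (m + o) ↔ OccAt u w (p + o) := by
      rw [occAt_iff, occAt_iff]
      refine forall₂_congr fun t ht => ?_
      rw [add_assoc, add_assoc, hum (o + t) (by omega)]
    have h2 : ∀ x : ZMod 2, x + 1 = 0 ↔ x = 1 := by decide
    rw [h1, hvm o (by omega), h2]
  have hcons' : Consecutive (fun i => OccAt u w i ∧ v i = 0) m (m + l) := by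
    obtain ⟨h1, h2, h3, h4⟩ := hcons
    refine ⟨(hocc 0 (Nat.zero_le _)).2 h1, (hocc l le_rfl).2 h2, by omega, fun t ht1 ht2 => ?_⟩
    have := hocc (t - m) (by omega)
    rw [show m + (t - m) = t by omega] at this
    exact fun hO => h4 _ (by omega) (by omega) (this.1 hO)
  rcases h.consecutive_cases hv0 hu hr hs hrw hsw hcons' with ⟨-, h1⟩ | ⟨c, hc, -, h1⟩
  · have := Nat.mul_le_mul_right r.length (he (b + 1))
    omega
  · refine ⟨c, hc, ?_⟩
    have h2 : e (c + 1) * r.length = e (b + 1) * r.length := by omega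
    exact Nat.eq_of_mul_eq_mul_right hrpos h2

/-- The exponents of a block cut of a standard Sturmian sequence are not eventually constant. -/
theorem exists_exponent_ne (h : BlockCut u r s e Q) (hstd : IsStandardSturmian u)
    (hr : 0 < r.length) (hs : 0 < s.length) (a : ℕ) : ∃ b, e (b + 1) ≠ a := by
  by_contra! hcon
  apply not_eventually_periodic_of_standard hstd (N := Q 1) (p := a * r.length + s.length)
    (by omega)
  intro i hi
  obtain ⟨b, t, ht, h1, h2⟩ := h.exists_cell hr hs i
  have hb : ∃ b', b = b' + 1 := by
    refine ⟨b - 1, ?_⟩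
    by_contra hb
    obtain rfl : b = 0 := by omega
    have h3 : Q 1 = _ := h.succ 0
    rcases h2 with ⟨h2, h4⟩ | ⟨rfl, h4⟩
    · have := Nat.mul_le_mul_right r.length (show t + 1 ≤ e 0 from h2)
      rw [add_mul, one_mul] at this
      omega
    · omega
  obtain ⟨b, rfl⟩ := hb
  have hshift : Q (b + 1 + 1) = Q (b + 1) + (a * r.length + s.length) := by
    rw [h.succ (b + 1), hcon, add_assoc]
  have htail : ∀ z : Word, OccAt u z (Q (b + 1) + t * r.length) →
      OccAt u z (Q (b + 1 + 1) + t * r.length) → i < Q (b + 1) + t * r.length + z.length →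
      u (i + (a * r.length + s.length)) = u i := by
    intro z hz1 hz2 hiz
    have e1 := occAt_iff.1 hz1 (i - (Q (b + 1) + t * r.length)) (by omega)
    have e2 := occAt_iff.1 hz2 (i - (Q (b + 1) + t * r.length)) (by omega)
    rw [e1] at e2
    rw [show Q (b + 1) + t * r.length + (i - (Q (b + 1) + t * r.length)) = i by omega] at e2
    rw [e2]
    congr 1
    omega
  rcases h2 with ⟨h2, h3⟩ | ⟨rfl, h3⟩
  · refine htail r (h.occ_r _ t h2) (h.occ_r _ t ?_) h3
    rwa [hcon] at h2 ⊢
  · refine htail s (h.occ_s _) ?_ h3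
    have := h.occ_s (b + 1 + 1)
    rwa [hcon] at this ⊢

end BlockCut

end Blocks

section ReturnWords

variable {u v : ℕ → ZMod 2}

theorem mem_returnWords_primitive_prefix_iff (hu : ∀ i, u i = v i + v (i + 1)) (hv0 : v 0 = 0)
    {n : ℕ} {R : Word} :
    R ∈ ReturnWords v (List.ofFn fun i : Fin (n + 1) => v i) ↔
      ∃ i L, Consecutive (fun m => OccAt u (List.ofFn fun i : Fin n => u i) m ∧ v m = 0) i (i + L) ∧
        R = List.ofFn fun t : Fin L => v (i + t) := by
  simp only [ReturnWords, Set.mem_ofPred_eq, Consecutive, occAt_primitive_prefix_iff hu hv0]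
  constructor
  · rintro ⟨i, j, hi, hj, hij, hno, rfl⟩
    refine ⟨i, j - i, ?_, rfl⟩
    rw [Nat.add_sub_cancel' hij.le]
    exact ⟨hi, hj, hij, hno⟩
  · rintro ⟨i, L, ⟨hi, hj, hij, hno⟩, rfl⟩
    refine ⟨i, i + L, hi, hj, hij, hno, ?_⟩
    rw [Nat.add_sub_cancel_left]

theorem exists_returnWord_Sdiff_eq (hu : ∀ i, u i = v i + v (i + 1)) (hv0 : v 0 = 0)
    {n i : ℕ} {z : Word} (hz : OccAt u z i)
    (hi : Consecutive (fun m => OccAt u (List.ofFn fun i : Fin n => u i) m ∧ v m = 0)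
      i (i + z.length)) :
    ∃ R ∈ ReturnWords v (List.ofFn fun i : Fin (n + 1) => v i), Sdiff (R ++ [0]) = z :=
  ⟨_, (mem_returnWords_primitive_prefix_iff hu hv0).2 ⟨i, z.length, hi, rfl⟩,
    Sdiff_ofFn_append_zero hu hz hi.2.1.2⟩

end ReturnWords

/-- type `SU(k)`: let `v` be a complementary symmetric Rote sequence
(starting with `0`) associated with a standard Sturmian sequence `u = S(v)`; let
`x` be the prefix of `v` of length `n+1` and `w = S(x)` the corresponding prefix of
`u`, with return words `r` (more frequent, stable) and `s` (unstable), `u` being a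
concatenation of blocks `rᵏs` and `r^{k+1}s`. Then the three return words `A`, `B`,
`C` of `x` in `v` satisfy `S(A0) = r`, `S(B0) = s r^{k+1} s` and `S(C0) = s rᵏ s`. -/
theorem rote_return_words_SU (v u : ℕ → ZMod 2)
    (hv0 : v 0 = 0) (hrote : IsCSRote v)
    (hu : ∀ i, u i = v i + v (i + 1)) (hstd : IsStandardSturmian u)
    (n : ℕ) (r s : Word) (k : ℕ) (hk : 1 ≤ k)
    (hrw : ReturnWords u (Sdiff (List.ofFn fun i : Fin (n + 1) => v i)) = {r, s})
    (hrstable : Even (r.count 1)) (hsunstable : ¬ Even (s.count 1))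
    (hdec : ConcatOfBlocks u ((List.replicate k r).flatten ++ s)
        ((List.replicate (k + 1) r).flatten ++ s)) :
    ∃ A B C : Word, A ≠ B ∧ A ≠ C ∧ B ≠ C ∧
      ReturnWords v (List.ofFn fun i : Fin (n + 1) => v i) = {A, B, C} ∧
      Sdiff (A ++ [0]) = r ∧
      Sdiff (B ++ [0]) = s ++ (List.replicate (k + 1) r).flatten ++ s ∧
      Sdiff (C ++ [0]) = s ++ (List.replicate k r).flatten ++ s := by
  have hw : Sdiff (List.ofFn fun i : Fin (n + 1) => v i) = List.ofFn fun i : Fin n => u i := by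
    simpa using Sdiff_ofFn hu 0 n
  rw [hw] at hrw
  have hr : r ∈ ReturnWords u (List.ofFn fun i : Fin n => u i) := by simp [hrw]
  have hs : s ∈ ReturnWords u (List.ofFn fun i : Fin n => u i) := by simp [hrw]
  have hrpos := BlockCut.pos_of_mem_returnWords hr
  have hspos := BlockCut.pos_of_mem_returnWords hs
  obtain ⟨e, Q, he, hcut⟩ := hdec.exists_blockCut (List.ne_nil_of_length_pos hspos)
  have he1 : ∀ b, 1 ≤ e b := fun b => by
    rcases he b with h | h <;> omega
  have hmid : ∀ a, (∃ b, e (b + 1) = a) →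
      ∃ R ∈ ReturnWords v (List.ofFn fun i : Fin (n + 1) => v i),
        Sdiff (R ++ [0]) = s ++ (List.replicate a r).flatten ++ s := by
    rintro a ⟨b, rfl⟩
    obtain ⟨c, hc, hcb⟩ :=
      hcut.exists_even_succ_exponent hv0 hrote hu hrstable hsunstable hr hs he1 b
    rw [← hcb]
    refine exists_returnWord_Sdiff_eq hu hv0 (hcut.occAt_s_r_s c) ?_
    rw [BlockCut.length_s_r_s, ← ZMod.natCast_eq_zero_iff_even.2 hc]
    exact hcut.consecutive_s hv0 hu hrstable hsunstable hr hs c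
  obtain ⟨A, hA, hAr⟩ : ∃ R ∈ ReturnWords v (List.ofFn fun i : Fin (n + 1) => v i),
      Sdiff (R ++ [0]) = r := by
    refine exists_returnWord_Sdiff_eq hu hv0 (hcut.occ_r 0 0 (he1 0)) ?_
    simpa using hcut.consecutive_r hv0 hu hrstable hsunstable hr hs (he1 0)
  obtain ⟨B, hB, hBr⟩ := hmid (k + 1) <| by
    obtain ⟨b, hb⟩ := hcut.exists_exponent_ne hstd hrpos hspos k
    exact ⟨b, (he _).resolve_left hb⟩
  obtain ⟨C, hC, hCr⟩ := hmid k <| by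
    obtain ⟨b, hb⟩ := hcut.exists_exponent_ne hstd hrpos hspos (k + 1)
    exact ⟨b, (he _).resolve_right hb⟩
  have hlA := congrArg List.length hAr
  have hlB := congrArg List.length hBr
  have hlC := congrArg List.length hCr
  rw [BlockCut.length_s_r_s, add_mul, one_mul] at hlB
  rw [BlockCut.length_s_r_s] at hlC
  have hkr : r.length ≤ k * r.length := Nat.le_mul_of_pos_left _ hk
  refine ⟨A, B, C, ?_, ?_, ?_, Set.Subset.antisymm ?_ ?_, hAr, hBr, hCr⟩
  · rintro rfl
    omega
  · rintro rfl
    omega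
  · rintro rfl
    omega
  · intro R hR
    obtain ⟨i, L, hi, rfl⟩ := (mem_returnWords_primitive_prefix_iff hu hv0).1 hR
    have hdet : ∀ z : Word, OccAt u z i → L = z.length → ∀ D, Sdiff (D ++ [0]) = z →
        (List.ofFn fun t : Fin L => v (i + t)) = D := by
      rintro z hz rfl D hD
      exact Sdiff_append_zero_injective
        ((Sdiff_ofFn_append_zero hu hz hi.2.1.2).trans hD.symm)
    rcases hcut.consecutive_cases hv0 hu hrstable hsunstable hr hs hi with
      ⟨h1, h2⟩ | ⟨b, -, h1, h2⟩
    · exact .inl (hdet r h1 (by omega) A hAr)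
    · rcases he (b + 1) with hb | hb <;> rw [hb] at h1 h2
      · exact .inr (.inr (hdet _ h1 (by rw [BlockCut.length_s_r_s]; omega) C hCr))
      · exact .inr (.inl (hdet _ h1 (by rw [BlockCut.length_s_r_s]; omega) B hBr))
  · rintro R (rfl | rfl | rfl) <;> assumption
end
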